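/- arXiv:2211.01306 — 2 statements merged into one kernel-verified Lean document; each statement's English description precedes it below -/
import Mathlib

section
/- Let K ≥ 2, τ > 0, and β ∈ ℝ^K with all β_i > 0, let f(x) = (K−1)! τ^{K−1} (∑_{j=1}^K β_j/x_j^τ)^{−K} ∏_{i=1}^K β_i/x_i^{τ+1} be the Concrete density on S_K, and write k(x) = ∑_{j=1}^K β_j/x_j^τ. Then for all indices i, j, the β–β component of the Fisher information in score form satisfies ∫_{S_K} f(x) (1/β_i − K/(k(x) x_i^τ))(1/β_j − K/(k(x) x_j^τ)) d^{K−1}x = (K δ_{ij} − 1)/((K+1) β_i β_j), where δ is the Kronecker delta. (The factors are the score functions ∂ log f/∂β_i; this is the coefficient of dβ_i dβ_j in the information metric of the Concrete distribution.) -/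
open MeasureTheory Finset

noncomputable def fillMap (K : ℕ) (u : Fin (K - 1) → ℝ) : Fin K → ℝ :=
  fun i => if h : (i : ℕ) < K - 1 then u ⟨i, h⟩ else 1 - ∑ j, u j

/-- The `(K-1)`-dimensional Lebesgue measure on the probability simplex `S_K`. -/
noncomputable def simplexMeasure (K : ℕ) : Measure (Fin K → ℝ) :=
  Measure.map (fillMap K)
    (volume.restrict {u : Fin (K - 1) → ℝ | (∀ j, 0 ≤ u j) ∧ ∑ j, u j ≤ 1})

/-- The density of the Concrete distribution `C(β, τ)` on the simplex. -/
noncomputable def concreteDensity (K : ℕ) (β : Fin K → ℝ) (τ : ℝ) (x : Fin K → ℝ) : ℝ :=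
  (Nat.factorial (K - 1) : ℝ) * τ ^ (K - 1) * (∑ j, β j / x j ^ τ) ^ (-(K : ℝ)) *
    ∏ i, β i / x i ^ (τ + 1)

/-- `k(x) = ∑_j β_j/x_j^τ`. -/
noncomputable def kfun (K : ℕ) (β : Fin K → ℝ) (τ : ℝ) (x : Fin K → ℝ) : ℝ :=
  ∑ j, β j / x j ^ τ

/-- Kronecker delta. -/
def kd {K : ℕ} (a b : Fin K) : ℝ := if a = b then 1 else 0

/-!
If the `y i` are independent Fréchet variables of shape `τ` and scales `β i ^ (1 / τ)`, then
`y / ∑ i, y i` has the Concrete law. More generally, in polar coordinates `y = r • x` on the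
orthant, with `x` in the simplex, a product of Fréchet type weights with exponents `s i` splits into
a function of `x` times a Fréchet type weight in `r` with exponent `∑ i, s i`. The integrals over
the `y i` and over `r` are Gamma integrals, which gives the total mass of the function of `x`.
Raising one exponent by `1` multiplies that function by the share `β i / (k(x) * x i ^ τ)`, so the
shares have the moments of a uniform point of the simplex, and the scores are affine in the shares.
-/

section Simplex

variable {n : ℕ}

lemma fillMap_succ (u : Fin n → ℝ) : fillMap (n + 1) u = Fin.snoc u (1 - ∑ j, u j) := by
  ext i
  cases i using Fin.lastCases <;> simp [fillMap]

lemma measurable_finSnoc {X α : Type*} [MeasurableSpace X] [MeasurableSpace α] {f : X → Fin n → α}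
    {g : X → α} (hf : Measurable f) (hg : Measurable g) :
    Measurable fun x => (Fin.snoc (f x) (g x) : Fin (n + 1) → α) := by
  refine measurable_pi_iff.2 fun i => ?_
  cases i using Fin.lastCases with
  | last => simpa only [Fin.snoc_last] using hg
  | cast i => simpa only [Fin.snoc_castSucc] using hf.eval

lemma measurable_fillMap_succ : Measurable (fillMap (n + 1)) := by
  simp only [funext fillMap_succ]
  exact measurable_finSnoc measurable_id (by fun_prop)

lemma sum_fillMap_succ (u : Fin n → ℝ) : ∑ i, fillMap (n + 1) u i = 1 := by
  simp [fillMap_succ, Fin.sum_univ_castSucc]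

lemma fillMap_succ_nonneg_iff (u : Fin n → ℝ) :
    0 ≤ fillMap (n + 1) u ↔ (∀ j, 0 ≤ u j) ∧ ∑ j, u j ≤ 1 := by
  simp [fillMap_succ, Pi.le_def, Fin.forall_fin_succ', sub_nonneg]

lemma snoc_smul_sub_sum (s : ℝ) (u : Fin n → ℝ) :
    (Fin.snoc (s • u) (s - ∑ j, (s • u) j) : Fin (n + 1) → ℝ) = s • fillMap (n + 1) u := by
  ext i
  cases i using Fin.lastCases <;> simp [fillMap_succ, mul_sub, Finset.mul_sum]

lemma simplexMeasure_succ_eq_restrict :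
    simplexMeasure (n + 1) = (Measure.map (fillMap (n + 1)) volume).restrict (Set.Ici 0) := by
  rw [Measure.restrict_map measurable_fillMap_succ measurableSet_Ici]
  exact congrArg (fun t => Measure.map _ (volume.restrict t))
    (Set.ext fun u => (fillMap_succ_nonneg_iff u).symm)

lemma lintegral_eq_lintegral_snoc_sub {φ : (Fin n → ℝ) → ℝ} (hφ : Measurable φ)
    {G : (Fin (n + 1) → ℝ) → ENNReal} (hG : Measurable G) :
    ∫⁻ y, G y = ∫⁻ s : ℝ, ∫⁻ v : Fin n → ℝ, G (Fin.snoc v (s - φ v)) := by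
  have hsplit := (volume_preserving_piFinSuccAbove (fun _ : Fin (n + 1) => ℝ)
    (Fin.last n)).symm.lintegral_comp hG
  simp only [MeasurableEquiv.piFinSuccAbove, Fin.insertNthEquiv_last] at hsplit
  calc ∫⁻ y, G y
      = ∫⁻ p : ℝ × (Fin n → ℝ), G (Fin.snoc p.2 p.1) := hsplit.symm
    _ = ∫⁻ v : Fin n → ℝ, ∫⁻ t : ℝ, G (Fin.snoc v t) :=
        lintegral_prod_symm _
          (hG.comp (measurable_finSnoc measurable_snd measurable_fst)).aemeasurable
    _ = ∫⁻ v : Fin n → ℝ, ∫⁻ s : ℝ, G (Fin.snoc v (s - φ v)) :=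
        lintegral_congr fun v =>
          (lintegral_sub_right_eq_self (fun t : ℝ => G (Fin.snoc v t)) (φ v)).symm
    _ = ∫⁻ s : ℝ, ∫⁻ v : Fin n → ℝ, G (Fin.snoc v (s - φ v)) :=
        lintegral_lintegral_swap (hG.comp (measurable_finSnoc measurable_fst
          (measurable_snd.sub (hφ.comp measurable_fst)))).aemeasurable

lemma lintegral_eq_mul_lintegral_comp_smul {E : Type*} [NormedAddCommGroup E] [NormedSpace ℝ E]
    [MeasurableSpace E] [BorelSpace E] [FiniteDimensional ℝ E] (μ : Measure E)
    [μ.IsAddHaarMeasure] {s : ℝ} (hs : s ≠ 0) (G : E → ENNReal) :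
    ∫⁻ v, G v ∂μ = ENNReal.ofReal |s ^ Module.finrank ℝ E| * ∫⁻ u, G (s • u) ∂μ := by
  have hmap : ∫⁻ u, G (s • u) ∂μ = ∫⁻ v, G v ∂(Measure.map (s • ·) μ) :=
    ((Homeomorph.smulOfNeZero s hs).measurableEmbedding.lintegral_map G).symm
  rw [hmap, Measure.map_addHaar_smul μ hs, lintegral_smul_measure, smul_eq_mul, ← mul_assoc,
    ← ENNReal.ofReal_mul (abs_nonneg _), ← abs_mul, mul_inv_cancel₀ (pow_ne_zero _ hs)]
  simp

-- Slice along the hyperplanes `∑ i, y i = s`, then rescale each slice to `s = 1`.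
lemma lintegral_eq_lintegral_smul_fillMap {G : (Fin (n + 1) → ℝ) → ENNReal} (hG : Measurable G) :
    ∫⁻ y, G y = ∫⁻ u : Fin n → ℝ, ∫⁻ s : ℝ,
      ENNReal.ofReal |s ^ n| * G (s • fillMap (n + 1) u) := by
  have hslice {s : ℝ} (hs : s ≠ 0) : ∫⁻ v : Fin n → ℝ, G (Fin.snoc v (s - ∑ j, v j)) =
      ∫⁻ u : Fin n → ℝ, ENNReal.ofReal |s ^ n| * G (s • fillMap (n + 1) u) := by
    rw [lintegral_eq_mul_lintegral_comp_smul volume hs, Module.finrank_fin_fun,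
      lintegral_const_mul' _ _ ENNReal.ofReal_ne_top]
    simp only [snoc_smul_sub_sum]
  rw [lintegral_eq_lintegral_snoc_sub (φ := fun v => ∑ j, v j) (by fun_prop) hG,
    lintegral_congr_ae ((Measure.ae_ne volume 0).mono fun _ => hslice)]
  refine lintegral_lintegral_swap (Measurable.aemeasurable ?_)
  exact Measurable.mul (by fun_prop)
    (hG.comp (measurable_fst.smul (measurable_fillMap_succ.comp measurable_snd)))

lemma smul_nonneg_iff_of_sum_eq_one {ι : Type*} [Fintype ι] {x : ι → ℝ} (hx : ∑ i, x i = 1)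
    {s : ℝ} (hs : s ≠ 0) : 0 ≤ s • x ↔ 0 ≤ x ∧ 0 < s := by
  refine ⟨fun h => ?_, fun ⟨hx0, hs0⟩ => smul_nonneg hs0.le hx0⟩
  have hsum : ∑ i, (s • x) i = s := by simp [← Finset.mul_sum, hx]
  have hs0 : 0 < s := hs.symm.lt_of_le (hsum ▸ Finset.sum_nonneg fun i _ => h i)
  exact ⟨nonneg_of_smul_nonneg_of_pos_left h hs0, hs0⟩

lemma measurable_lintegral_Ioi_smul {F : (Fin (n + 1) → ℝ) → ENNReal} (hF : Measurable F) :
    Measurable fun x : Fin (n + 1) → ℝ =>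
      ∫⁻ r in Set.Ioi (0 : ℝ), ENNReal.ofReal (r ^ n) * F (r • x) :=
  Measurable.lintegral_prod_right' (f := fun p : (Fin (n + 1) → ℝ) × ℝ =>
    ENNReal.ofReal (p.2 ^ n) * F (p.2 • p.1)) (by fun_prop)

theorem setLIntegral_Ici_eq_lintegral_simplexMeasure {F : (Fin (n + 1) → ℝ) → ENNReal}
    (hF : Measurable F) :
    ∫⁻ y in Set.Ici 0, F y = ∫⁻ x, (∫⁻ r in Set.Ioi (0 : ℝ),
      ENNReal.ofReal (r ^ n) * F (r • x)) ∂simplexMeasure (n + 1) := by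
  rw [simplexMeasure_succ_eq_restrict, ← lintegral_indicator measurableSet_Ici,
    ← lintegral_indicator measurableSet_Ici,
    lintegral_map ((measurable_lintegral_Ioi_smul hF).indicator measurableSet_Ici)
      measurable_fillMap_succ,
    lintegral_eq_lintegral_smul_fillMap (hF.indicator measurableSet_Ici)]
  refine lintegral_congr fun u => ?_
  set x := fillMap (n + 1) u
  have hcone {s : ℝ} (hs : s ≠ 0) : s • x ∈ Set.Ici 0 ↔ 0 ≤ x ∧ 0 < s :=
    smul_nonneg_iff_of_sum_eq_one (sum_fillMap_succ u) hs
  by_cases hx : 0 ≤ x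
  · rw [Set.indicator_of_mem (Set.mem_Ici.2 hx), ← lintegral_indicator measurableSet_Ioi]
    refine lintegral_congr_ae ((Measure.ae_ne volume 0).mono fun s hs => ?_)
    by_cases hs0 : 0 < s
    · simp [Set.indicator, hs0, abs_of_pos, (hcone hs).2 ⟨hx, hs0⟩]
    · simp [Set.indicator, hcone hs, hs0]
  · rw [Set.indicator_of_notMem (by exact hx)]
    refine lintegral_eq_zero_of_ae_eq_zero ((Measure.ae_ne volume 0).mono fun s hs => ?_)
    simp [Set.indicator, hcone hs, hx]

lemma ae_simplexMeasure_pos : ∀ᵐ x ∂simplexMeasure (n + 1), ∀ i, 0 < x i := by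
  refine ae_all_iff.2 fun i => ?_
  have hnonneg : ∀ᵐ x ∂simplexMeasure (n + 1), 0 ≤ x := by
    rw [simplexMeasure_succ_eq_restrict]
    exact ae_restrict_mem measurableSet_Ici
  let F : (Fin (n + 1) → ℝ) → ENNReal := {y | y i = 0}.indicator 1
  have hF : Measurable F :=
    measurable_one.indicator (measurableSet_eq_fun (measurable_pi_apply i) measurable_const)
  have hcone : ∫⁻ x, (∫⁻ r in Set.Ioi (0 : ℝ),
      ENNReal.ofReal (r ^ n) * F (r • x)) ∂simplexMeasure (n + 1) = 0 := by
    rw [← setLIntegral_Ici_eq_lintegral_simplexMeasure hF]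
    refine le_antisymm ((setLIntegral_le_lintegral _ _).trans_eq ?_) zero_le
    rw [lintegral_indicator_one (measurableSet_eq_fun (measurable_pi_apply i) measurable_const)]
    exact Measure.pi_hyperplane (fun _ => volume) i 0
  rw [lintegral_eq_zero_iff (measurable_lintegral_Ioi_smul hF)] at hcone
  filter_upwards [hnonneg, hcone] with x hx0 hx
  refine (hx0 i).lt_of_ne' fun hxi => ?_
  rw [Pi.zero_apply, lintegral_eq_zero_iff (by fun_prop)] at hx
  have : (ae (volume.restrict (Set.Ioi (0 : ℝ)))).NeBot := by
    rw [ae_neBot]; simp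
  obtain ⟨r, hr, hr0⟩ := (hx.and (ae_restrict_mem measurableSet_Ioi)).exists
  simp [F, hxi, (pow_pos (Set.mem_Ioi.1 hr0) n).not_ge] at hr

end Simplex

section Frechet

variable {τ c s : ℝ}

/-- If `γ` is Gamma distributed with shape `s`, then `(c / γ) ^ (1 / τ)` has density
`τ / Γ(s) * frechetWeight τ c s` on `(0, ∞)`; for `s = 1` this is a Fréchet distribution. -/
noncomputable def frechetWeight (τ c s y : ℝ) : ℝ :=
  (c / y ^ τ) ^ s * Real.exp (-(c / y ^ τ)) / y

lemma measurable_frechetWeight : Measurable (frechetWeight τ c s) := by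
  unfold frechetWeight
  fun_prop

lemma frechetWeight_nonneg (hc : 0 ≤ c) {y : ℝ} (hy : 0 ≤ y) : 0 ≤ frechetWeight τ c s y := by
  unfold frechetWeight
  positivity

-- The substitution `z = y ^ (-τ)` turns this into a Gamma integral.
lemma integral_frechetWeight (hτ : 0 < τ) (hc : 0 < c) (hs : 0 < s) :
    ∫ y in Set.Ioi 0, frechetWeight τ c s y = Real.Gamma s / τ := by
  have hsubst {y : ℝ} (hy : 0 < y) : frechetWeight τ c s y = (|-τ| * y ^ (-τ - 1)) •
      (c ^ s / τ * ((y ^ (-τ)) ^ (s - 1) * Real.exp (-(c * y ^ (-τ))))) := by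
    have hyτ : 0 < y ^ τ := Real.rpow_pos_of_pos hy τ
    rw [frechetWeight, abs_neg, abs_of_pos hτ, Real.rpow_sub_one hy.ne', Real.rpow_neg hy.le,
      Real.rpow_sub_one (inv_ne_zero hyτ.ne'), div_eq_mul_inv c,
      Real.mul_rpow hc.le (inv_nonneg.2 hyτ.le), smul_eq_mul]
    field_simp
  calc ∫ y in Set.Ioi 0, frechetWeight τ c s y
      = ∫ z in Set.Ioi 0, c ^ s / τ * (z ^ (s - 1) * Real.exp (-(c * z))) := by
        rw [setIntegral_congr_fun measurableSet_Ioi fun y hy => hsubst hy]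
        exact integral_comp_rpow_Ioi (fun z => c ^ s / τ * (z ^ (s - 1) * Real.exp (-(c * z))))
          (neg_ne_zero.2 hτ.ne')
    _ = c ^ s / τ * ((1 / c) ^ s * Real.Gamma s) := by
        rw [integral_const_mul, Real.integral_rpow_mul_exp_neg_mul_Ioi hs hc]
    _ = Real.Gamma s / τ := by
        rw [one_div, Real.inv_rpow hc.le]
        have := (Real.rpow_pos_of_pos hc s).ne'
        field_simp

lemma integrableOn_frechetWeight (hτ : 0 < τ) (hc : 0 < c) (hs : 0 < s) :
    IntegrableOn (frechetWeight τ c s) (Set.Ioi 0) := by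
  refine .of_integral_ne_zero ?_
  rw [integral_frechetWeight hτ hc hs]
  exact (div_pos (Real.Gamma_pos_of_pos hs) hτ).ne'

lemma lintegral_frechetWeight (hτ : 0 < τ) (hc : 0 < c) (hs : 0 < s) :
    ∫⁻ y in Set.Ioi 0, ENNReal.ofReal (frechetWeight τ c s y) =
      ENNReal.ofReal (Real.Gamma s / τ) := by
  rw [← integral_frechetWeight hτ hc hs, ofReal_integral_eq_lintegral_ofReal
    (integrableOn_frechetWeight hτ hc hs)]
  filter_upwards [ae_restrict_mem measurableSet_Ioi] with y hy
  exact frechetWeight_nonneg hc.le (Set.mem_Ioi.1 hy).le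

lemma lintegral_prod_frechetWeight {ι : Type*} [Fintype ι] {β s : ι → ℝ} (hτ : 0 < τ)
    (hβ : ∀ i, 0 < β i) (hs : ∀ i, 0 < s i) :
    ∫⁻ y in Set.Ici (0 : ι → ℝ), ENNReal.ofReal (∏ i, frechetWeight τ (β i) (s i) (y i)) =
      ENNReal.ofReal (∏ i, Real.Gamma (s i) / τ) := by
  have horthant : (volume : Measure (ι → ℝ)).restrict (Set.Ici 0) =
      Measure.pi fun _ => volume.restrict (Set.Ioi 0) := by
    simp only [← Set.pi_univ_Ici, volume_pi, Measure.restrict_pi_pi, Pi.zero_apply,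
      restrict_Ioi_eq_restrict_Ici]
  rw [← ofReal_integral_eq_lintegral_ofReal]
  · rw [horthant, integral_fintype_prod_eq_prod fun i => frechetWeight τ (β i) (s i)]
    simp only [integral_frechetWeight hτ (hβ _) (hs _)]
  · rw [horthant]
    exact .fintype_prod fun i => integrableOn_frechetWeight hτ (hβ i) (hs i)
  · filter_upwards [ae_restrict_mem measurableSet_Ici] with y hy
    exact Finset.prod_nonneg fun i _ => frechetWeight_nonneg (hβ i).le (hy i)

end Frechet

section Concrete

variable {K n : ℕ} {β : Fin K → ℝ} {τ : ℝ} {x : Fin K → ℝ}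

lemma measurable_kfun : Measurable (kfun K β τ) := by
  unfold kfun
  fun_prop

lemma kfun_pos [NeZero K] (hβ : ∀ i, 0 < β i) (hx : ∀ i, 0 < x i) : 0 < kfun K β τ x :=
  Finset.sum_pos (fun i _ => div_pos (hβ i) (Real.rpow_pos_of_pos (hx i) τ)) univ_nonempty

/-- The share of the `i`-th term in `k(x) = ∑ j, β j / x j ^ τ`. The scores of the Concrete
distribution are affine in these shares, which are Dirichlet distributed with all parameters `1`. -/
noncomputable def concreteShare (K : ℕ) (β : Fin K → ℝ) (τ : ℝ) (i : Fin K) (x : Fin K → ℝ) : ℝ :=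
  β i / x i ^ τ / kfun K β τ x

/-- The unnormalised density on the simplex of `y / ∑ i, y i`, where the `y i` are independent
with densities proportional to `frechetWeight τ (β i) (s i)`. The Concrete density is
proportional to the case `s = 1`. -/
noncomputable def concreteWeight (K : ℕ) (β : Fin K → ℝ) (τ : ℝ) (s x : Fin K → ℝ) : ℝ :=
  kfun K β τ x ^ (-∑ i, s i) * ∏ i, (β i / x i ^ τ) ^ s i / x i

lemma measurable_concreteWeight (s : Fin K → ℝ) : Measurable (concreteWeight K β τ s) := by
  have := measurable_kfun (β := β) (τ := τ)
  unfold concreteWeight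
  fun_prop

lemma concreteWeight_nonneg (hβ : ∀ i, 0 < β i) (hx : ∀ i, 0 < x i) (s : Fin K → ℝ) :
    0 ≤ concreteWeight K β τ s x := by
  have hw (i) : 0 < β i / x i ^ τ := div_pos (hβ i) (Real.rpow_pos_of_pos (hx i) τ)
  refine mul_nonneg (Real.rpow_nonneg (Finset.sum_nonneg fun i _ => (hw i).le) _) ?_
  exact Finset.prod_nonneg fun i _ => div_nonneg (Real.rpow_nonneg (hw i).le _) (hx i).le

lemma concreteDensity_eq_concreteWeight (hx : ∀ i, 0 < x i) :
    concreteDensity K β τ x = (K - 1).factorial * τ ^ (K - 1) * concreteWeight K β τ 1 x := by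
  have hfactor (i) : β i / x i ^ (τ + 1) = (β i / x i ^ τ) ^ (1 : ℝ) / x i := by
    rw [Real.rpow_add_one (hx i).ne', Real.rpow_one, div_div]
  simp only [concreteDensity, concreteWeight, kfun, hfactor, Pi.one_apply, Finset.sum_const,
    card_univ, Fintype.card_fin, nsmul_eq_mul, mul_one, mul_assoc]

lemma concreteWeight_add_single (hβ : ∀ i, 0 < β i) (hx : ∀ i, 0 < x i) (s : Fin K → ℝ)
    (i : Fin K) :
    concreteWeight K β τ (s + Pi.single i 1) x =
      concreteWeight K β τ s x * concreteShare K β τ i x := by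
  have hw (l) : 0 < β l / x l ^ τ := div_pos (hβ l) (Real.rpow_pos_of_pos (hx l) τ)
  have hraise (l) : (β l / x l ^ τ) ^ (s + Pi.single i 1 : Fin K → ℝ) l / x l =
      (β l / x l ^ τ) ^ s l / x l * (if l = i then β i / x i ^ τ else 1) := by
    rw [Pi.add_apply, Real.rpow_add (hw l), Pi.single_apply]
    split_ifs with h
    · rw [h, Real.rpow_one, div_mul_eq_mul_div]
    · simp
  have : NeZero K := .of_pos i.pos
  have hk := kfun_pos (τ := τ) hβ hx
  simp only [concreteWeight, concreteShare, hraise]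
  simp only [Finset.prod_mul_distrib, Finset.prod_ite_eq', mem_univ, if_true, Pi.add_apply,
    Finset.sum_add_distrib, Finset.sum_pi_single', neg_add, Real.rpow_add hk, Real.rpow_neg_one]
  field_simp

lemma one_div_sub_div_eq_concreteShare {i : Fin K} (hi : β i ≠ 0) (a : ℝ) :
    1 / β i - a / (kfun K β τ x * x i ^ τ) = (1 - a * concreteShare K β τ i x) / β i := by
  rw [concreteShare, sub_div, div_div, mul_div_assoc', mul_comm (x i ^ τ), div_div,
    mul_div_mul_right _ _ hi]

lemma pow_mul_prod_frechetWeight_smul {β s x : Fin (n + 1) → ℝ} (hβ : ∀ i, 0 < β i)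
    (hx : ∀ i, 0 < x i) {r : ℝ} (hr : 0 < r) :
    r ^ n * ∏ i, frechetWeight τ (β i) (s i) ((r • x) i) =
      concreteWeight (n + 1) β τ s x *
        frechetWeight τ (kfun (n + 1) β τ x) (∑ i, s i) r := by
  have hrτ : 0 < r ^ τ := Real.rpow_pos_of_pos hr τ
  have hw (i) : 0 < β i / x i ^ τ := div_pos (hβ i) (Real.rpow_pos_of_pos (hx i) τ)
  have hscale (i) : β i / (r * x i) ^ τ = β i / x i ^ τ / r ^ τ := by
    rw [Real.mul_rpow hr.le (hx i).le, mul_comm (r ^ τ), div_div]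
  have hfactor (i) : frechetWeight τ (β i) (s i) ((r • x) i) = (β i / x i ^ τ) ^ s i / x i *
      ((r ^ τ) ^ s i)⁻¹ * Real.exp (-(β i / x i ^ τ / r ^ τ)) * r⁻¹ := by
    rw [Pi.smul_apply, smul_eq_mul, frechetWeight, hscale, Real.div_rpow (hw i).le hrτ.le]
    ring
  have hexp : ∏ i, Real.exp (-(β i / x i ^ τ / r ^ τ)) =
      Real.exp (-(kfun (n + 1) β τ x / r ^ τ)) := by
    rw [← Real.exp_sum, Finset.sum_neg_distrib, ← Finset.sum_div, kfun]
  have hk := kfun_pos (τ := τ) hβ hx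
  have := Real.rpow_pos_of_pos hk (∑ i, s i)
  simp only [hfactor, Finset.prod_mul_distrib, hexp, Finset.prod_inv_distrib, prod_const, card_univ,
    Fintype.card_fin, ← Real.rpow_sum_of_pos hrτ]
  rw [concreteWeight, frechetWeight, Real.div_rpow hk.le hrτ.le, Real.rpow_neg hk.le]
  generalize ∏ i, (β i / x i ^ τ) ^ s i / x i = P
  field_simp
  ring

end Concrete

section Single

variable {ι : Type*} [DecidableEq ι] {s : ι → ℝ}

lemma prod_Gamma_add_single [Fintype ι] {i : ι} (hi : s i ≠ 0) :
    ∏ l, Real.Gamma ((s + Pi.single i 1 : ι → ℝ) l) = s i * ∏ l, Real.Gamma (s l) := by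
  have hfactor (l) : Real.Gamma ((s + Pi.single i 1 : ι → ℝ) l) =
      (if l = i then s i else 1) * Real.Gamma (s l) := by
    rw [Pi.add_apply, Pi.single_apply]
    split_ifs with h
    · rw [h, Real.Gamma_add_one hi]
    · simp
  simp only [hfactor, Finset.prod_mul_distrib, Finset.prod_ite_eq', mem_univ, if_true]

lemma add_single_one_pos (hs : ∀ l, 0 < s l) (i l : ι) :
    0 < (s + Pi.single i 1 : ι → ℝ) l := by
  have hsingle : 0 ≤ (Pi.single i 1 : ι → ℝ) := Pi.single_nonneg.2 zero_le_one
  exact add_pos_of_pos_of_nonneg (hs l) (hsingle l)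

end Single

section Moments

variable {n : ℕ} {β : Fin (n + 1) → ℝ} {τ : ℝ} {s : Fin (n + 1) → ℝ}

lemma lintegral_concreteWeight (hτ : 0 < τ) (hβ : ∀ i, 0 < β i) (hs : ∀ i, 0 < s i) :
    ∫⁻ x, ENNReal.ofReal (concreteWeight (n + 1) β τ s x) ∂simplexMeasure (n + 1) =
      ENNReal.ofReal ((∏ i, Real.Gamma (s i)) / (τ ^ n * Real.Gamma (∑ i, s i))) := by
  have hS : 0 < ∑ i, s i := Finset.sum_pos (fun i _ => hs i) univ_nonempty
  have hradial : ∀ᵐ x ∂simplexMeasure (n + 1),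
      ∫⁻ r in Set.Ioi (0 : ℝ), ENNReal.ofReal (r ^ n) *
        ENNReal.ofReal (∏ i, frechetWeight τ (β i) (s i) ((r • x) i)) =
      ENNReal.ofReal (concreteWeight (n + 1) β τ s x) *
        ENNReal.ofReal (Real.Gamma (∑ i, s i) / τ) := by
    filter_upwards [ae_simplexMeasure_pos] with x hx
    rw [← lintegral_frechetWeight hτ (kfun_pos (τ := τ) hβ hx) hS,
      ← lintegral_const_mul' _ _ ENNReal.ofReal_ne_top]
    refine setLIntegral_congr_fun measurableSet_Ioi fun r (hr : 0 < r) => ?_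
    rw [← ENNReal.ofReal_mul (by positivity), pow_mul_prod_frechetWeight_smul hβ hx hr,
      ENNReal.ofReal_mul (concreteWeight_nonneg hβ hx s)]
  have hc : 0 < Real.Gamma (∑ i, s i) / τ := div_pos (Real.Gamma_pos_of_pos hS) hτ
  have hmeas : Measurable fun y : Fin (n + 1) → ℝ =>
      ENNReal.ofReal (∏ i, frechetWeight τ (β i) (s i) (y i)) :=
    (Finset.measurable_prod _ fun i _ =>
      measurable_frechetWeight.comp (measurable_pi_apply i)).ennreal_ofReal
  have hpolar := setLIntegral_Ici_eq_lintegral_simplexMeasure hmeas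
  rw [lintegral_congr_ae hradial, lintegral_mul_const' _ _ ENNReal.ofReal_ne_top,
    lintegral_prod_frechetWeight hτ hβ hs] at hpolar
  rw [ENNReal.eq_div_iff (ENNReal.ofReal_pos.2 hc).ne' ENNReal.ofReal_ne_top |>.2
    ((mul_comm _ _).trans hpolar.symm), ← ENNReal.ofReal_div_of_pos hc]
  congr 1
  simp only [Finset.prod_div_distrib, prod_const, card_univ, Fintype.card_fin]
  field_simp
  ring

lemma concreteWeight_nonneg_ae (hβ : ∀ i, 0 < β i) :
    0 ≤ᵐ[simplexMeasure (n + 1)] concreteWeight (n + 1) β τ s :=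
  ae_simplexMeasure_pos.mono fun _ hx => concreteWeight_nonneg hβ hx s

lemma integrable_concreteWeight (hτ : 0 < τ) (hβ : ∀ i, 0 < β i) (hs : ∀ i, 0 < s i) :
    Integrable (concreteWeight (n + 1) β τ s) (simplexMeasure (n + 1)) := by
  refine ⟨(measurable_concreteWeight s).aestronglyMeasurable, ?_⟩
  rw [hasFiniteIntegral_iff_ofReal (concreteWeight_nonneg_ae hβ), lintegral_concreteWeight hτ hβ hs]
  exact ENNReal.ofReal_lt_top

theorem integral_concreteWeight (hτ : 0 < τ) (hβ : ∀ i, 0 < β i) (hs : ∀ i, 0 < s i) :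
    ∫ x, concreteWeight (n + 1) β τ s x ∂simplexMeasure (n + 1) =
      (∏ i, Real.Gamma (s i)) / (τ ^ n * Real.Gamma (∑ i, s i)) := by
  rw [integral_eq_lintegral_of_nonneg_ae (concreteWeight_nonneg_ae hβ)
    (measurable_concreteWeight s).aestronglyMeasurable, lintegral_concreteWeight hτ hβ hs]
  have hS : 0 < ∑ i, s i := Finset.sum_pos (fun i _ => hs i) univ_nonempty
  have := Real.Gamma_pos_of_pos hS
  have hprod : 0 ≤ ∏ i, Real.Gamma (s i) :=
    Finset.prod_nonneg fun i _ => (Real.Gamma_pos_of_pos (hs i)).le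
  exact ENNReal.toReal_ofReal (by positivity)

lemma integral_concreteWeight_add_single (hτ : 0 < τ) (hβ : ∀ i, 0 < β i) (hs : ∀ i, 0 < s i)
    (i : Fin (n + 1)) :
    ∫ x, concreteWeight (n + 1) β τ (s + Pi.single i 1) x ∂simplexMeasure (n + 1) =
      s i / (∑ l, s l) * ∫ x, concreteWeight (n + 1) β τ s x ∂simplexMeasure (n + 1) := by
  have hS : 0 < ∑ i, s i := Finset.sum_pos (fun i _ => hs i) univ_nonempty
  rw [integral_concreteWeight hτ hβ (add_single_one_pos hs i), integral_concreteWeight hτ hβ hs,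
    prod_Gamma_add_single (hs i).ne']
  simp only [Pi.add_apply, Finset.sum_add_distrib, Finset.sum_pi_single', mem_univ, if_true]
  rw [Real.Gamma_add_one hS.ne']
  have := Real.Gamma_pos_of_pos hS
  field_simp

end Moments

section ConcreteMoments

variable {n : ℕ} {β : Fin (n + 1) → ℝ} {τ : ℝ}

lemma concreteDensity_ae_eq :
    (fun x => n.factorial * τ ^ n * concreteWeight (n + 1) β τ 1 x) =ᵐ[simplexMeasure (n + 1)]
      concreteDensity (n + 1) β τ :=
  ae_simplexMeasure_pos.mono fun _ hx => (concreteDensity_eq_concreteWeight hx).symm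

lemma concreteDensity_mul_share_ae_eq (hβ : ∀ i, 0 < β i) (i : Fin (n + 1)) :
    (fun x => n.factorial * τ ^ n * concreteWeight (n + 1) β τ (1 + Pi.single i 1) x)
      =ᵐ[simplexMeasure (n + 1)]
    fun x => concreteDensity (n + 1) β τ x * concreteShare (n + 1) β τ i x := by
  filter_upwards [ae_simplexMeasure_pos, concreteDensity_ae_eq] with x hx hdens
  rw [← hdens, concreteWeight_add_single hβ hx, mul_assoc, mul_assoc, mul_assoc]

lemma concreteDensity_mul_share_mul_share_ae_eq (hβ : ∀ i, 0 < β i) (i j : Fin (n + 1)) :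
    (fun x => n.factorial * τ ^ n *
      concreteWeight (n + 1) β τ (1 + Pi.single i 1 + Pi.single j 1) x)
      =ᵐ[simplexMeasure (n + 1)]
    fun x => concreteDensity (n + 1) β τ x * concreteShare (n + 1) β τ i x *
      concreteShare (n + 1) β τ j x := by
  filter_upwards [ae_simplexMeasure_pos, concreteDensity_mul_share_ae_eq hβ i] with x hx hdens
  rw [← hdens, concreteWeight_add_single hβ hx, mul_assoc, mul_assoc, mul_assoc]

lemma integrable_concreteDensity (hτ : 0 < τ) (hβ : ∀ i, 0 < β i) :
    Integrable (concreteDensity (n + 1) β τ) (simplexMeasure (n + 1)) :=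
  ((integrable_concreteWeight hτ hβ (s := 1) fun _ => one_pos).const_mul _).congr
    concreteDensity_ae_eq

lemma integrable_concreteDensity_mul_share (hτ : 0 < τ) (hβ : ∀ i, 0 < β i) (i : Fin (n + 1)) :
    Integrable (fun x => concreteDensity (n + 1) β τ x * concreteShare (n + 1) β τ i x)
      (simplexMeasure (n + 1)) :=
  have hs : ∀ l, 0 < (1 + Pi.single i 1 : Fin (n + 1) → ℝ) l :=
    add_single_one_pos (fun _ => one_pos) i
  ((integrable_concreteWeight hτ hβ hs).const_mul _).congr (concreteDensity_mul_share_ae_eq hβ i)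

lemma integrable_concreteDensity_mul_share_mul_share (hτ : 0 < τ) (hβ : ∀ i, 0 < β i)
    (i j : Fin (n + 1)) :
    Integrable (fun x => concreteDensity (n + 1) β τ x * concreteShare (n + 1) β τ i x *
      concreteShare (n + 1) β τ j x) (simplexMeasure (n + 1)) :=
  have hs : ∀ l, 0 < (1 + Pi.single i 1 + Pi.single j 1 : Fin (n + 1) → ℝ) l :=
    add_single_one_pos (add_single_one_pos (fun _ => one_pos) i) j
  ((integrable_concreteWeight hτ hβ hs).const_mul _).congr
    (concreteDensity_mul_share_mul_share_ae_eq hβ i j)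

lemma integral_concreteDensity (hτ : 0 < τ) (hβ : ∀ i, 0 < β i) :
    ∫ x, concreteDensity (n + 1) β τ x ∂simplexMeasure (n + 1) = 1 := by
  rw [← integral_congr_ae concreteDensity_ae_eq, integral_const_mul,
    integral_concreteWeight hτ hβ (s := 1) fun _ => one_pos]
  have hfact : (n.factorial : ℝ) ≠ 0 := Nat.cast_ne_zero.2 n.factorial_ne_zero
  simp only [Pi.one_apply, Real.Gamma_one, prod_const_one, sum_const, card_univ, Fintype.card_fin,
    nsmul_eq_mul, Nat.cast_add, Nat.cast_one, mul_one, Real.Gamma_nat_eq_factorial]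
  field_simp

lemma integral_concreteDensity_mul_share (hτ : 0 < τ) (hβ : ∀ i, 0 < β i) (i : Fin (n + 1)) :
    ∫ x, concreteDensity (n + 1) β τ x * concreteShare (n + 1) β τ i x ∂simplexMeasure (n + 1) =
      1 / (n + 1) := by
  rw [← integral_congr_ae (concreteDensity_mul_share_ae_eq hβ i), integral_const_mul,
    integral_concreteWeight_add_single hτ hβ (s := 1) (fun _ => one_pos), mul_left_comm,
    ← integral_const_mul, integral_congr_ae concreteDensity_ae_eq,
    integral_concreteDensity hτ hβ]
  simp

lemma integral_concreteDensity_mul_share_mul_share (hτ : 0 < τ) (hβ : ∀ i, 0 < β i)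
    (i j : Fin (n + 1)) :
    ∫ x, concreteDensity (n + 1) β τ x * concreteShare (n + 1) β τ i x *
      concreteShare (n + 1) β τ j x ∂simplexMeasure (n + 1) =
      (1 + kd i j) / ((n + 1) * (n + 2)) := by
  have hkd : (Pi.single i 1 : Fin (n + 1) → ℝ) j = kd i j := by
    simp only [Pi.single_apply, kd, eq_comm]
  rw [← integral_congr_ae (concreteDensity_mul_share_mul_share_ae_eq hβ i j), integral_const_mul,
    integral_concreteWeight_add_single hτ hβ (add_single_one_pos (s := 1) (fun _ => one_pos) i),
    mul_left_comm, ← integral_const_mul,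
    integral_congr_ae (concreteDensity_mul_share_ae_eq hβ i),
    integral_concreteDensity_mul_share hτ hβ]
  simp only [Pi.add_apply, Pi.one_apply, hkd, sum_add_distrib, sum_const, card_univ,
    Fintype.card_fin, nsmul_eq_mul, Nat.cast_add, Nat.cast_one, mul_one, sum_pi_single', mem_univ,
    if_true]
  field_simp
  ring

lemma integral_concreteDensity_mul_centered_share (hτ : 0 < τ) (hβ : ∀ i, 0 < β i)
    (i j : Fin (n + 1)) :
    ∫ x, concreteDensity (n + 1) β τ x * ((1 - (n + 1) * concreteShare (n + 1) β τ i x) *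
      (1 - (n + 1) * concreteShare (n + 1) β τ j x)) ∂simplexMeasure (n + 1) =
      ((n + 1) * kd i j - 1) / (n + 2) := by
  set μ := simplexMeasure (n + 1)
  set f := concreteDensity (n + 1) β τ
  set z := concreteShare (n + 1) β τ
  have hf : Integrable f μ := integrable_concreteDensity hτ hβ
  have hfz (l) : Integrable (fun x => (n + 1) * (f x * z l x)) μ :=
    (integrable_concreteDensity_mul_share hτ hβ l).const_mul _
  have hfzz : Integrable (fun x => (n + 1) ^ 2 * (f x * z i x * z j x)) μ :=
    (integrable_concreteDensity_mul_share_mul_share hτ hβ i j).const_mul _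
  have hlin_i : Integrable (fun x => f x - (n + 1) * (f x * z i x)) μ := hf.sub (hfz i)
  have hlin_ij : Integrable (fun x => f x - (n + 1) * (f x * z i x) - (n + 1) * (f x * z j x)) μ :=
    hlin_i.sub (hfz j)
  calc ∫ x, f x * ((1 - (n + 1) * z i x) * (1 - (n + 1) * z j x)) ∂μ
      = ∫ x, f x - (n + 1) * (f x * z i x) - (n + 1) * (f x * z j x) +
          (n + 1) ^ 2 * (f x * z i x * z j x) ∂μ := by
        congr with x
        ring
    _ = 1 - (n + 1) * (1 / (n + 1)) - (n + 1) * (1 / (n + 1)) +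
          (n + 1) ^ 2 * ((1 + kd i j) / ((n + 1) * (n + 2))) := by
        rw [integral_add hlin_ij hfzz, integral_sub hlin_i (hfz j), integral_sub hf (hfz i)]
        simp only [integral_const_mul, f, z, μ, integral_concreteDensity hτ hβ,
          integral_concreteDensity_mul_share hτ hβ,
          integral_concreteDensity_mul_share_mul_share hτ hβ]
    _ = ((n + 1) * kd i j - 1) / (n + 2) := by
        field_simp
        ring

end ConcreteMoments

/-- The β–β component of the Fisher information of the Concrete distribution in score
form: `E[(∂log f/∂β_i)(∂log f/∂β_j)] = (K δ_ij − 1)/((K+1) β_i β_j)`. -/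
theorem concrete_fisher_beta_beta_score
    (K : ℕ) (hK : 2 ≤ K) (τ : ℝ) (hτ : 0 < τ)
    (β : Fin K → ℝ) (hβ : ∀ i, 0 < β i) (i j : Fin K) :
    ∫ x, concreteDensity K β τ x *
          ((1 / β i - (K : ℝ) / (kfun K β τ x * x i ^ τ)) *
            (1 / β j - (K : ℝ) / (kfun K β τ x * x j ^ τ)))
        ∂(simplexMeasure K)
      = ((K : ℝ) * kd i j - 1) / (((K : ℝ) + 1) * β i * β j) := by
  obtain ⟨n, rfl⟩ := Nat.exists_eq_succ_of_ne_zero (by lia : K ≠ 0)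
  have hscore (l x) : 1 / β l - ((n + 1 : ℕ) : ℝ) / (kfun (n + 1) β τ x * x l ^ τ) =
      (1 - (n + 1) * concreteShare (n + 1) β τ l x) / β l := by
    rw [one_div_sub_div_eq_concreteShare (hβ l).ne', Nat.cast_succ]
  simp only [Nat.succ_eq_add_one, hscore, div_mul_div_comm]
  simp only [mul_div_assoc', integral_div]
  rw [integral_concreteDensity_mul_centered_share hτ hβ, Nat.cast_succ, div_div, ← mul_assoc]
  norm_num [add_assoc]
end

section
/- Let K ≥ 2, τ > 0, and β ∈ ℝ^K with all β_i > 0, let f(x) = (K−1)! τ^{K−1} (∑_{j=1}^K β_j/x_j^τ)^{−K} ∏_{i=1}^K β_i/x_i^{τ+1} be the Concrete density on S_K, and write k(x) = ∑_{j=1}^K β_j/x_j^τ. Then the τ–τ component of the Fisher information in score form satisfies ∫_{S_K} f(x) ( (K ∑_{l=1}^K (β_l/x_l^τ) log x_l)/k(x) − ∑_{j=1}^K log x_j + (K−1)/τ )² d^{K−1}x = [ (K−1)(K π²/6 + 1) + (1/2) ∑_{i=1}^K ∑_{j=1}^K (log β_i − log β_j)² ] / ((K+1) τ²). (The squared factor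 is the score function ∂ log f/∂τ; this is the coefficient of dτ² in the information metric of the Concrete distribution.) -/
open MeasureTheory Finset

/-!
In softmax coordinates `x = softmax (y, 0)` on the open simplex the volume element is `∏ i, x i`,
and the substitution `z = c - τ y`, with `c` the differences of the `log (β i)`, turns the Concrete
density into `n! P z`, where `n = K - 1` and `P z = ∏ i, w i` with `w = softmax (z, 0)`. The score
becomes `S / τ`, where `-P S` is the divergence of the vector field `P z (c - z)`. Integration by
parts along this field therefore gives `∫ P S g = ∫ P (c - z) · ∇g`. With `g = 1` the mean of `S`
vanishes; with `g = S` the integral of `P S ^ 2` reduces to that of `P` times the variance of the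
entries of `(c - z, 0)` under the weights `w`, which is a sum over pairs `i, j` of second moments of
`z i - z j` under the density `w i w j P`. The moment generating function of `z i - z j` is a
Dirichlet integral, proportional to `Γ (2 + s) Γ (2 - s) = π (s - s ^ 3) / sin (π s)`, and the
Taylor coefficients of this function at `0` supply the moments.
-/

section PolynomialGrowth

variable {E : Type*} [NormedAddCommGroup E] {f g : E → ℝ}

/-- Continuous real functions bounded by a polynomial in the norm: the class of test functions
against which an exponentially decaying density may be integrated. Continuity is part of the
notion so that measurability comes for free. -/
@[fun_prop]
def HasPolynomialGrowth (f : E → ℝ) : Prop :=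
  Continuous f ∧ ∃ (M : ℝ) (k : ℕ), 0 ≤ M ∧ ∀ z, |f z| ≤ M * (1 + ‖z‖) ^ k

namespace HasPolynomialGrowth

@[fun_prop]
lemma const (a : ℝ) : HasPolynomialGrowth fun _ : E => a :=
  ⟨continuous_const, |a|, 0, abs_nonneg a, fun z => by simp⟩

@[fun_prop]
lemma add (hf : HasPolynomialGrowth f) (hg : HasPolynomialGrowth g) :
    HasPolynomialGrowth fun z => f z + g z := by
  obtain ⟨hf_cont, M, k, hM, hf_le⟩ := hf
  obtain ⟨hg_cont, N, l, hN, hg_le⟩ := hg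
  refine ⟨hf_cont.add hg_cont, M + N, k + l, add_nonneg hM hN, fun z => ?_⟩
  have h_one : 1 ≤ 1 + ‖z‖ := by simp
  calc |f z + g z| ≤ |f z| + |g z| := abs_add_le _ _
    _ ≤ M * (1 + ‖z‖) ^ k + N * (1 + ‖z‖) ^ l := add_le_add (hf_le z) (hg_le z)
    _ ≤ M * (1 + ‖z‖) ^ (k + l) + N * (1 + ‖z‖) ^ (k + l) := by
        gcongr <;> first | exact h_one | omega
    _ = (M + N) * (1 + ‖z‖) ^ (k + l) := by ring

@[fun_prop]
lemma mul (hf : HasPolynomialGrowth f) (hg : HasPolynomialGrowth g) :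
    HasPolynomialGrowth fun z => f z * g z := by
  obtain ⟨hf_cont, M, k, hM, hf_le⟩ := hf
  obtain ⟨hg_cont, N, l, hN, hg_le⟩ := hg
  refine ⟨hf_cont.mul hg_cont, M * N, k + l, mul_nonneg hM hN, fun z => ?_⟩
  calc |f z * g z| = |f z| * |g z| := abs_mul _ _
    _ ≤ (M * (1 + ‖z‖) ^ k) * (N * (1 + ‖z‖) ^ l) := by gcongr <;> simp only [hf_le, hg_le]
    _ = M * N * (1 + ‖z‖) ^ (k + l) := by ring

@[fun_prop]
lemma sub (hf : HasPolynomialGrowth f) (hg : HasPolynomialGrowth g) :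
    HasPolynomialGrowth fun z => f z - g z := by
  simpa [sub_eq_add_neg] using hf.add ((const (-1)).mul hg)

@[fun_prop]
lemma pow (hf : HasPolynomialGrowth f) (m : ℕ) : HasPolynomialGrowth fun z => f z ^ m := by
  induction m with
  | zero => simpa using const 1
  | succ m ih => simpa [pow_succ] using ih.mul hf

@[fun_prop]
lemma sum {ι : Type*} {s : Finset ι} {F : ι → E → ℝ} (hF : ∀ i ∈ s, HasPolynomialGrowth (F i)) :
    HasPolynomialGrowth fun z => ∑ i ∈ s, F i z := by
  classical
  induction s using Finset.induction_on with
  | empty => simpa using const 0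
  | insert i s hi ih =>
    simp_rw [Finset.sum_insert hi]
    exact (hF i (mem_insert_self i s)).add (ih fun j hj => hF j (mem_insert_of_mem hj))

@[fun_prop]
lemma clm_apply {ι : Type*} [NormedSpace ℝ E] (L : E →L[ℝ] (ι → ℝ)) (i : ι) :
    HasPolynomialGrowth fun z => L z i := by
  set φ : E →L[ℝ] ℝ := (ContinuousLinearMap.proj i).comp L
  refine ⟨φ.continuous, ‖φ‖, 1, norm_nonneg φ, fun z => (φ.le_opNorm z).trans ?_⟩
  gcongr
  simp

@[fun_prop]
lemma apply {ι : Type*} [Fintype ι] (i : ι) : HasPolynomialGrowth fun z : ι → ℝ => z i :=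
  clm_apply (.id ℝ (ι → ℝ)) i

lemma integrable_mul [MeasurableSpace E] [BorelSpace E] [SecondCountableTopology E]
    {μ : Measure E} [μ.HasTemperateGrowth] (hf : HasPolynomialGrowth f) {p : E → ℝ}
    (hp : Continuous p) (hp_le : ∀ z, |p z| ≤ Real.exp (-‖z‖)) :
    Integrable (fun z => p z * f z) μ := by
  obtain ⟨hf_cont, M, k, hM, hf_le⟩ := hf
  set m := μ.integrablePower
  refine ((μ.integrable_pow_neg_integrablePower).const_mul
    (M * (Nat.factorial (m + k) * Real.exp 1))).mono'
    (hp.mul hf_cont).aestronglyMeasurable (.of_forall fun z => ?_)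
  have h_exp : Real.exp (-‖z‖) * (1 + ‖z‖) ^ (m + k) ≤ Nat.factorial (m + k) * Real.exp 1 := by
    have := Real.pow_div_factorial_le_exp (1 + ‖z‖) (by positivity) (m + k)
    rw [div_le_iff₀ (by positivity), Real.exp_add] at this
    rw [Real.exp_neg, inv_mul_le_iff₀ (Real.exp_pos _)]
    linarith
  calc ‖p z * f z‖ = |p z| * |f z| := by rw [norm_mul, Real.norm_eq_abs, Real.norm_eq_abs]
    _ ≤ Real.exp (-‖z‖) * (M * (1 + ‖z‖) ^ k) := by gcongr <;> simp only [hp_le, hf_le]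
    _ = M * (Real.exp (-‖z‖) * (1 + ‖z‖) ^ (m + k)) * (1 + ‖z‖) ^ (-(m : ℝ)) := by
        rw [Real.rpow_neg (by positivity), Real.rpow_natCast, pow_add]
        field_simp
    _ ≤ M * (Nat.factorial (m + k) * Real.exp 1) * (1 + ‖z‖) ^ (-(m : ℝ)) := by gcongr

end HasPolynomialGrowth

end PolynomialGrowth

section Softmax

variable {ι : Type*} [Fintype ι]

/-- The softmax map from logits to weights of sum one. -/
noncomputable def softmax (a : ι → ℝ) (i : ι) : ℝ :=
  Real.exp (a i) / ∑ j, Real.exp (a j)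

/-- The derivative of `softmax` at `a`, that is the covariance operator of the weights
`softmax a`. -/
noncomputable def softmaxFDeriv (a : ι → ℝ) : (ι → ℝ) →L[ℝ] (ι → ℝ) :=
  .pi fun i => softmax a i • (.proj i - ∑ j, softmax a j • .proj j)

lemma softmaxFDeriv_apply (a v : ι → ℝ) (i : ι) :
    softmaxFDeriv a v i = softmax a i * (v i - ∑ j, softmax a j * v j) := by
  simp [softmaxFDeriv]

lemma sum_exp_pos [Nonempty ι] (a : ι → ℝ) : 0 < ∑ j, Real.exp (a j) :=
  Finset.sum_pos (fun _ _ => Real.exp_pos _) univ_nonempty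

lemma softmax_pos (a : ι → ℝ) (i : ι) : 0 < softmax a i :=
  have : Nonempty ι := ⟨i⟩
  div_pos (Real.exp_pos _) (sum_exp_pos a)

lemma prod_softmax_pos (a : ι → ℝ) : 0 < ∏ i, softmax a i :=
  Finset.prod_pos fun i _ => softmax_pos a i

lemma sum_softmax [Nonempty ι] (a : ι → ℝ) : ∑ i, softmax a i = 1 := by
  simp_rw [softmax, ← Finset.sum_div, div_self (sum_exp_pos a).ne']

lemma softmax_le_one (a : ι → ℝ) (i : ι) : softmax a i ≤ 1 := by
  have : Nonempty ι := ⟨i⟩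
  rw [← sum_softmax a]
  exact Finset.single_le_sum (fun j _ => (softmax_pos a j).le) (Finset.mem_univ i)

lemma log_softmax (a : ι → ℝ) (i : ι) :
    Real.log (softmax a i) = a i - Real.log (∑ j, Real.exp (a j)) := by
  have : Nonempty ι := ⟨i⟩
  rw [softmax, Real.log_div (Real.exp_pos _).ne' (sum_exp_pos a).ne', Real.log_exp]

lemma softmax_log {w : ι → ℝ} (hw_pos : ∀ i, 0 < w i) (hw_sum : ∑ i, w i = 1) :
    softmax (fun i => Real.log (w i)) = w := by
  ext i
  simp_rw [softmax, Real.exp_log (hw_pos _), hw_sum, div_one]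

lemma softmax_add_const (a : ι → ℝ) (t : ℝ) : softmax (fun i => a i + t) = softmax a := by
  ext i
  simp_rw [softmax, Real.exp_add, ← Finset.sum_mul]
  exact mul_div_mul_right _ _ (Real.exp_pos t).ne'

lemma softmax_div_softmax (a : ι → ℝ) (i j : ι) :
    softmax a i / softmax a j = Real.exp (a i - a j) := by
  have : Nonempty ι := ⟨i⟩
  rw [softmax, softmax, div_div_div_cancel_right₀ (sum_exp_pos a).ne', Real.exp_sub]

lemma prod_softmax_le_exp_sub (a : ι → ℝ) (i j : ι) :
    ∏ l, softmax a l ≤ Real.exp (a i - a j) := by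
  classical
  calc ∏ l, softmax a l = softmax a i * ∏ l ∈ univ.erase i, softmax a l :=
        (Finset.mul_prod_erase _ _ (Finset.mem_univ i)).symm
    _ ≤ softmax a i := mul_le_of_le_one_right (softmax_pos a i).le <|
        Finset.prod_le_one (fun l _ => (softmax_pos a l).le) fun l _ => softmax_le_one a l
    _ ≤ softmax a i / softmax a j :=
        le_div_self (softmax_pos a i).le (softmax_pos a j) (softmax_le_one a j)
    _ = Real.exp (a i - a j) := softmax_div_softmax a i j

lemma hasFDerivAt_softmax (a : ι → ℝ) : HasFDerivAt softmax (softmaxFDeriv a) a := by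
  refine hasFDerivAt_pi.2 fun i => ?_
  have : Nonempty ι := ⟨i⟩
  have h_exp (j : ι) : HasFDerivAt (fun a : ι → ℝ => Real.exp (a j)) _ a :=
    (hasFDerivAt_apply j a).exp
  have h_log := (HasFDerivAt.fun_sum fun j (_ : j ∈ univ) => h_exp j).log (sum_exp_pos a).ne'
  have h_eq (a : ι → ℝ) : softmax a i = Real.exp (a i - Real.log (∑ j, Real.exp (a j))) := by
    rw [← log_softmax, Real.exp_log (softmax_pos a i)]
  simp_rw [h_eq]
  refine (((hasFDerivAt_apply i a).sub h_log).exp).congr_fderiv ?_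
  ext v
  simp [← h_eq, softmax, div_eq_inv_mul, Finset.mul_sum, mul_assoc]

lemma continuous_softmax : Continuous (softmax (ι := ι)) :=
  continuous_iff_continuousAt.2 fun a => (hasFDerivAt_softmax a).continuousAt

lemma hasFDerivAt_prod_softmax (a : ι → ℝ) :
    HasFDerivAt (fun a : ι → ℝ => ∏ i, softmax a i)
      ((∏ i, softmax a i) • ∑ i, (1 - Fintype.card ι * softmax a i) •
        (ContinuousLinearMap.proj i : (ι → ℝ) →L[ℝ] ℝ)) a := by
  classical
  refine (HasFDerivAt.finsetProd fun i _ =>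
    hasFDerivAt_pi.1 (hasFDerivAt_softmax a) i).congr_fderiv ?_
  ext v
  have h_term (i : ι) : (∏ j ∈ univ.erase i, softmax a j) *
      (softmax a i * (v i - ∑ j, softmax a j * v j)) =
      (∏ j, softmax a j) * (v i - ∑ j, softmax a j * v j) := by
    rw [← mul_assoc, Finset.prod_erase_mul _ _ (Finset.mem_univ i)]
  simp [h_term, ← Finset.mul_sum, sub_mul, mul_assoc]

@[fun_prop]
lemma hasPolynomialGrowth_softmax {E : Type*} [NormedAddCommGroup E] {g : E → ι → ℝ}
    (hg : Continuous g) (i : ι) : HasPolynomialGrowth fun z => softmax (g z) i :=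
  ⟨(continuous_apply i).comp (continuous_softmax.comp hg), 1, 0, zero_le_one, fun z => by
    simpa [abs_of_pos (softmax_pos _ i)] using softmax_le_one (g z) i⟩

end Softmax

section ScaledScore

variable {ι : Type*} [Fintype ι]

/-- The score of the Concrete distribution times `τ`, expressed in the variables
`b i = log (β i)` and `s i = log (β i) - τ * log (x i)`. -/
noncomputable def scaledScore (b s : ι → ℝ) : ℝ :=
  ∑ i, (Fintype.card ι * softmax s i - 1) * (b i - s i) + (Fintype.card ι - 1)

/-- The derivative of `scaledScore b` at `s`. -/
noncomputable def scaledScoreFDeriv (b s : ι → ℝ) : (ι → ℝ) →L[ℝ] ℝ :=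
  ∑ i, ((Fintype.card ι * (b i - s i)) • (.proj i ∘L softmaxFDeriv s) -
    (Fintype.card ι * softmax s i - 1) • .proj i)

lemma scaledScoreFDeriv_apply (b s v : ι → ℝ) : scaledScoreFDeriv b s v =
    ∑ i, (Fintype.card ι * (b i - s i) * (softmax s i * (v i - ∑ j, softmax s j * v j)) -
      (Fintype.card ι * softmax s i - 1) * v i) := by
  simp [scaledScoreFDeriv, softmaxFDeriv_apply]

lemma hasFDerivAt_scaledScore (b s : ι → ℝ) :
    HasFDerivAt (scaledScore b) (scaledScoreFDeriv b s) s := by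
  refine HasFDerivAt.add_const _ (HasFDerivAt.fun_sum fun i _ => ?_)
  have h_weight := ((hasFDerivAt_pi.1 (hasFDerivAt_softmax s) i).const_mul
    (Fintype.card ι : ℝ)).sub_const 1
  refine (h_weight.mul ((hasFDerivAt_apply i s).const_sub (b i))).congr_fderiv ?_
  ext v
  simp only [smul_neg, add_apply, neg_apply, smul_apply, sub_apply, _root_.sum_apply,
    ContinuousLinearMap.proj_apply, ContinuousLinearMap.comp_apply, softmaxFDeriv_apply,
    smul_eq_mul]
  ring

lemma scaledScore_add_const [Nonempty ι] (b s : ι → ℝ) (t u : ℝ) :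
    scaledScore (fun i => b i + t) (fun i => s i + u) = scaledScore b s := by
  have h_sum : ∑ i, (Fintype.card ι * softmax s i - 1) = 0 := by
    simp [Finset.sum_sub_distrib, ← Finset.mul_sum, sum_softmax]
  have h_term (i : ι) : (Fintype.card ι * softmax s i - 1) * (b i + t - (s i + u)) =
      (Fintype.card ι * softmax s i - 1) * (b i - s i) +
        (Fintype.card ι * softmax s i - 1) * (t - u) := by ring
  simp_rw [scaledScore, softmax_add_const, h_term, Finset.sum_add_distrib, ← Finset.sum_mul, h_sum,
    zero_mul, add_zero]

lemma sum_sum_mul_mul_sub_sq {R : Type*} [CommRing R] (w a : ι → R) (hw : ∑ i, w i = 1) :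
    ∑ i, ∑ j, w i * w j * (a i - a j) ^ 2 =
      2 * (∑ i, w i * a i ^ 2 - (∑ i, w i * a i) ^ 2) := by
  have h_term (i j : ι) : w i * w j * (a i - a j) ^ 2 =
      w i * a i ^ 2 * w j + w i * (w j * a j ^ 2) - 2 * (w i * a i * (w j * a j)) := by ring
  simp_rw [h_term, Finset.sum_sub_distrib, Finset.sum_add_distrib, ← Finset.mul_sum,
    ← Finset.sum_mul, hw]
  ring

lemma scaledScoreFDeriv_sub [Nonempty ι] (b s : ι → ℝ) : scaledScoreFDeriv b s (b - s) =
    Fintype.card ι / 2 *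
        ∑ i, ∑ j, softmax s i * softmax s j * ((b i - s i) - (b j - s j)) ^ 2 -
      scaledScore b s + (Fintype.card ι - 1) := by
  rw [sum_sum_mul_mul_sub_sq _ (fun i => b i - s i) (sum_softmax s), scaledScoreFDeriv_apply,
    scaledScore]
  set m := ∑ j, softmax s j * (b - s) j
  have h_term (i : ι) : Fintype.card ι * (b i - s i) * (softmax s i * ((b - s) i - m)) -
      (Fintype.card ι * softmax s i - 1) * (b - s) i =
      Fintype.card ι * (softmax s i * (b i - s i) ^ 2) -
        Fintype.card ι * m * (softmax s i * (b i - s i)) -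
        (Fintype.card ι * softmax s i - 1) * (b i - s i) := by
    simp only [Pi.sub_apply]
    ring
  simp_rw [h_term, Finset.sum_sub_distrib, ← Finset.mul_sum]
  simp only [m, Pi.sub_apply]
  ring

@[fun_prop]
lemma hasPolynomialGrowth_scaledScore {E : Type*} [NormedAddCommGroup E] [NormedSpace ℝ E]
    (b : ι → ℝ) (L : E →L[ℝ] (ι → ℝ)) : HasPolynomialGrowth fun z => scaledScore b (L z) := by
  unfold scaledScore
  fun_prop

@[fun_prop]
lemma hasPolynomialGrowth_scaledScoreFDeriv {E : Type*} [NormedAddCommGroup E] [NormedSpace ℝ E]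
    (b v : ι → ℝ) (L : E →L[ℝ] (ι → ℝ)) :
    HasPolynomialGrowth fun z => scaledScoreFDeriv b (L z) v := by
  simp_rw [scaledScoreFDeriv_apply]
  fun_prop

end ScaledScore

section Dirichlet

variable {n : ℕ}

/-- Appends a zero logit, so that `softmax ∘ snocZero` parametrizes the open simplex. -/
noncomputable def snocZero : (Fin n → ℝ) →L[ℝ] (Fin (n + 1) → ℝ) :=
  .pi (Fin.snoc (α := fun _ => (Fin n → ℝ) →L[ℝ] ℝ) (fun i => .proj i) 0)

@[simp]
lemma snocZero_castSucc (z : Fin n → ℝ) (i : Fin n) : snocZero z i.castSucc = z i := by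
  simp [snocZero]

@[simp]
lemma snocZero_last (z : Fin n → ℝ) : snocZero z (Fin.last n) = 0 := by
  simp [snocZero]

@[fun_prop]
lemma continuous_snocZero : Continuous (snocZero (n := n)) :=
  snocZero.continuous

lemma snocZero_single (l : Fin n) (a : ℝ) :
    snocZero (Pi.single l a) = Pi.single l.castSucc a := by
  ext i
  induction i using Fin.lastCases with
  | last => simp
  | cast i => simp [Pi.single_apply]

lemma snocZero_sub_last (a : Fin (n + 1) → ℝ) :
    snocZero (fun i => a i.castSucc - a (Fin.last n)) = fun i => a i + -a (Fin.last n) := by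
  ext i
  induction i using Fin.lastCases <;> simp [sub_eq_add_neg]

lemma prod_softmax_snocZero_le_exp_neg_norm (z : Fin n → ℝ) :
    ∏ i, softmax (snocZero z) i ≤ Real.exp (-‖z‖) := by
  have h_log (i j : Fin (n + 1)) :
      snocZero z j - snocZero z i ≤ -Real.log (∏ l, softmax (snocZero z) l) := by
    rw [le_neg, Real.log_le_iff_le_exp (prod_softmax_pos _), neg_sub]
    exact prod_softmax_le_exp_sub _ i j
  rw [← Real.log_le_iff_le_exp (prod_softmax_pos _), le_neg,
    pi_norm_le_iff_of_nonneg (by simpa using h_log 0 0)]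
  intro i
  refine abs_le'.2 ⟨?_, ?_⟩
  · simpa using h_log (Fin.last n) i.castSucc
  · simpa using h_log i.castSucc (Fin.last n)

lemma integrable_prod_softmax_mul {f : (Fin n → ℝ) → ℝ}
    (hf : HasPolynomialGrowth f) : Integrable fun z => (∏ i, softmax (snocZero z) i) * f z :=
  hf.integrable_mul
    (continuous_finsetProd _ fun i _ =>
      (continuous_apply i).comp (continuous_softmax.comp continuous_snocZero))
    fun z => by
      simpa [abs_of_pos (prod_softmax_pos _)] using prod_softmax_snocZero_le_exp_neg_norm z

/-- The unnormalized density of `log X` for `X` gamma distributed with shape `a` and rate `r`. -/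
noncomputable def logGammaKernel (a r z : ℝ) : ℝ :=
  Real.exp (a * z) * Real.exp (-(r * Real.exp z))

lemma integral_logGammaKernel {a r : ℝ} (ha : 0 < a) (hr : 0 < r) :
    ∫ z, logGammaKernel a r z = Real.Gamma a * r ^ (-a) := by
  have h_exp (z : ℝ) : logGammaKernel a r z =
      |Real.exp z| • (Real.exp z ^ (a - 1) * Real.exp (-(r * Real.exp z))) := by
    rw [logGammaKernel, smul_eq_mul, abs_of_pos (Real.exp_pos z), ← mul_assoc, ← Real.exp_mul,
      ← Real.exp_add z]
    ring_nf
  have h_subst := integral_image_eq_integral_abs_deriv_smul (s := Set.univ) MeasurableSet.univ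
    (fun x _ => (Real.hasDerivAt_exp x).hasDerivWithinAt) Real.exp_injective.injOn
    (fun x : ℝ => x ^ (a - 1) * Real.exp (-(r * x)))
  rw [Set.image_univ, Real.range_exp, Real.integral_rpow_mul_exp_neg_mul_Ioi ha hr,
    setIntegral_univ] at h_subst
  simp_rw [h_exp]
  rw [← h_subst, Real.rpow_neg hr.le, one_div, Real.inv_rpow hr.le, mul_comm]

lemma integrable_logGammaKernel {a r : ℝ} (ha : 0 < a) (hr : 0 < r) :
    Integrable (logGammaKernel a r) := by
  refine .of_integral_ne_zero ?_
  rw [integral_logGammaKernel ha hr]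
  exact (mul_pos (Real.Gamma_pos_of_pos ha) (Real.rpow_pos_of_pos hr _)).ne'

lemma integrableOn_rpow_mul_exp_neg_mul_Ioi {a r : ℝ} (ha : 0 < a) (hr : 0 < r) :
    IntegrableOn (fun t : ℝ => t ^ (a - 1) * Real.exp (-(r * t))) (Set.Ioi 0) := by
  refine Integrable.of_integral_ne_zero ?_
  rw [Real.integral_rpow_mul_exp_neg_mul_Ioi ha hr]
  exact (mul_pos (Real.rpow_pos_of_pos (by positivity) _) (Real.Gamma_pos_of_pos ha)).ne'

-- Integrating over an auxiliary rate `r` turns a power of `∑ j, exp (a j)` into an exponential that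
-- factors over the coordinates, which reduces the Dirichlet integral to gamma integrals.
lemma integral_rpow_mul_prod_logGammaKernel {ι : Type*} [Fintype ι] [Nonempty ι] {α : ι → ℝ}
    (hα : 0 < ∑ i, α i) (a : ι → ℝ) :
    ∫ r in Set.Ioi (0 : ℝ), r ^ (∑ i, α i - 1) * ∏ i, logGammaKernel (α i) r (a i) =
      Real.Gamma (∑ i, α i) * ∏ i, softmax a i ^ α i := by
  have h_kernel (r : ℝ) : r ^ (∑ i, α i - 1) * ∏ i, logGammaKernel (α i) r (a i) =
      (∏ i, Real.exp (α i * a i)) *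
        (r ^ (∑ i, α i - 1) * Real.exp (-((∑ i, Real.exp (a i)) * r))) := by
    simp_rw [logGammaKernel, Finset.prod_mul_distrib, ← Real.exp_sum, Finset.sum_neg_distrib,
      ← Finset.mul_sum]
    ring_nf
  have h_weight (i : ι) : softmax a i ^ α i =
      Real.exp (α i * a i) * (1 / ∑ j, Real.exp (a j)) ^ α i := by
    rw [softmax, div_eq_mul_one_div, Real.mul_rpow (Real.exp_pos _).le
      (one_div_nonneg.2 (sum_exp_pos a).le), ← Real.exp_mul, mul_comm (a i)]
  simp_rw [h_kernel, h_weight]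
  rw [integral_const_mul, Real.integral_rpow_mul_exp_neg_mul_Ioi hα (sum_exp_pos a),
    Finset.prod_mul_distrib, Real.rpow_sum_of_pos (one_div_pos.2 (sum_exp_pos a))]
  ring

lemma integral_rpow_mul_prod_logGammaKernel_snocZero {α : Fin (n + 1) → ℝ} (hα : ∀ i, 0 < α i)
    {r : ℝ} (hr : 0 < r) :
    ∫ z : Fin n → ℝ, r ^ (∑ i, α i - 1) * ∏ i, logGammaKernel (α i) r (snocZero z i) =
      (∏ i : Fin n, Real.Gamma (α i.castSucc)) *
        (r ^ (α (Fin.last n) - 1) * Real.exp (-(1 * r))) := by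
  have h_last : logGammaKernel (α (Fin.last n)) r 0 = Real.exp (-(1 * r)) := by
    simp [logGammaKernel]
  simp_rw [Fin.prod_univ_castSucc, snocZero_castSucc, snocZero_last, h_last, ← mul_assoc]
  rw [integral_mul_const, integral_const_mul,
    integral_fintype_prod_volume_eq_prod fun i : Fin n => logGammaKernel (α i.castSucc) r]
  simp_rw [integral_logGammaKernel (hα _) hr]
  rw [Finset.prod_mul_distrib, ← Real.rpow_sum_of_pos hr, mul_left_comm, ← Real.rpow_add hr,
    Fin.sum_univ_castSucc, Finset.sum_neg_distrib]
  ring_nf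

lemma integrable_rpow_mul_prod_logGammaKernel_snocZero {α : Fin (n + 1) → ℝ}
    (hα : ∀ i, 0 < α i) {r : ℝ} (hr : 0 < r) :
    Integrable fun z : Fin n → ℝ =>
      r ^ (∑ i, α i - 1) * ∏ i, logGammaKernel (α i) r (snocZero z i) := by
  simp_rw [Fin.prod_univ_castSucc, snocZero_castSucc, snocZero_last]
  exact ((Integrable.fintype_prod fun i : Fin n =>
    integrable_logGammaKernel (hα i.castSucc) hr).mul_const _).const_mul _

lemma integrable_prod_rpow_mul_prod_logGammaKernel {α : Fin (n + 1) → ℝ} (hα : ∀ i, 0 < α i) :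
    Integrable (Function.uncurry fun (r : ℝ) (z : Fin n → ℝ) =>
        r ^ (∑ i, α i - 1) * ∏ i, logGammaKernel (α i) r (snocZero z i))
      ((volume.restrict (Set.Ioi 0)).prod volume) := by
  rw [integrable_prod_iff]
  · refine ⟨?_, ((integrableOn_rpow_mul_exp_neg_mul_Ioi (hα (Fin.last n)) one_pos).const_mul
      (∏ i : Fin n, Real.Gamma (α i.castSucc))).congr ?_⟩
    all_goals filter_upwards [ae_restrict_mem measurableSet_Ioi] with r (hr : 0 < r)
    · exact integrable_rpow_mul_prod_logGammaKernel_snocZero hα hr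
    · rw [← integral_rpow_mul_prod_logGammaKernel_snocZero hα hr]
      refine integral_congr_ae (.of_forall fun z => (Real.norm_of_nonneg ?_).symm)
      unfold logGammaKernel
      positivity
  · refine Measurable.aestronglyMeasurable ?_
    unfold logGammaKernel
    fun_prop

lemma integrable_prod_softmax_rpow {α : Fin (n + 1) → ℝ} (hα : ∀ i, 0 < α i) :
    Integrable fun z : Fin n → ℝ => ∏ i, softmax (snocZero z) i ^ α i := by
  have hα_sum : 0 < ∑ i, α i := Finset.sum_pos (fun i _ => hα i) univ_nonempty
  have h_int := (integrable_prod_rpow_mul_prod_logGammaKernel hα).integral_prod_right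
  simp_rw [Function.uncurry_apply_pair, integral_rpow_mul_prod_logGammaKernel hα_sum] at h_int
  exact (integrable_const_mul_iff (Real.Gamma_pos_of_pos hα_sum).ne'.isUnit _).1 h_int

lemma integral_prod_softmax_rpow {α : Fin (n + 1) → ℝ} (hα : ∀ i, 0 < α i) :
    ∫ z : Fin n → ℝ, ∏ i, softmax (snocZero z) i ^ α i =
      (∏ i, Real.Gamma (α i)) / Real.Gamma (∑ i, α i) := by
  have hα_sum : 0 < ∑ i, α i := Finset.sum_pos (fun i _ => hα i) univ_nonempty
  have h_swap := integral_integral_swap (integrable_prod_rpow_mul_prod_logGammaKernel hα)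
  rw [setIntegral_congr_fun measurableSet_Ioi fun r hr =>
      integral_rpow_mul_prod_logGammaKernel_snocZero hα hr,
    integral_const_mul, Real.integral_rpow_mul_exp_neg_mul_Ioi (hα _) one_pos] at h_swap
  simp_rw [integral_rpow_mul_prod_logGammaKernel hα_sum] at h_swap
  rw [integral_const_mul] at h_swap
  rw [eq_div_iff (Real.Gamma_pos_of_pos hα_sum).ne', mul_comm, ← h_swap, Fin.prod_univ_castSucc]
  simp

lemma integral_prod_softmax :
    ∫ z : Fin n → ℝ, ∏ i, softmax (snocZero z) i = 1 / Nat.factorial n := by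
  simpa [Real.Gamma_nat_eq_factorial] using
    integral_prod_softmax_rpow (α := fun _ : Fin (n + 1) => 1) fun _ => one_pos

end Dirichlet

section MomentGeneratingFunction

open ProbabilityTheory

lemma iteratedDeriv_zero_of_mul_sin_eventuallyEq {M : ℝ → ℝ} {C : ℝ} (hM : ContDiffAt ℝ 3 M 0)
    (hM_eq : (fun s => M s * Real.sin (Real.pi * s)) =ᶠ[nhds 0]
      fun s => C * Real.pi * (s - s ^ 3)) :
    M 0 = C ∧ deriv M 0 = 0 ∧ iteratedDeriv 2 M 0 = C * (Real.pi ^ 2 / 3 - 2) := by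
  have h_leibniz (k : ℕ) (hk : k ≤ 3) : ∑ i ∈ range (k + 1), (k.choose i : ℝ) *
      iteratedDeriv i M 0 * (Real.pi ^ (k - i) * iteratedDeriv (k - i) Real.sin 0) =
      C * Real.pi * ((if k = 1 then 1 else 0) - if k = 3 then (Nat.factorial 3 : ℝ) else 0) := by
    have h_eq := hM_eq.iteratedDeriv_eq k
    rw [iteratedDeriv_fun_mul (hM.of_le (by exact_mod_cast hk)) (by fun_prop),
      iteratedDeriv_const_mul_field, iteratedDeriv_fun_sub (by fun_prop) (by fun_prop),
      iteratedDeriv_fun_pow_zero] at h_eq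
    have h_id := iteratedDeriv_fun_pow_zero (𝕜 := ℝ) (n := k) (m := 1)
    simp only [pow_one] at h_id
    rw [h_id] at h_eq
    simpa [iteratedDeriv_comp_const_mul Real.contDiff_sin] using h_eq
  have h_one : M 0 = C := by
    simpa [Finset.sum_range_succ] using h_leibniz 1 (by norm_num)
  have h_two : deriv M 0 = 0 := by
    simpa [Finset.sum_range_succ, iteratedDeriv_one] using h_leibniz 2 (by norm_num)
  have h_three : -(M 0 * Real.pi ^ 3) + 3 * iteratedDeriv 2 M 0 * Real.pi =
      -(C * Real.pi * 6) := by
    simpa [Finset.sum_range_succ, Nat.choose, Nat.factorial] using h_leibniz 3 le_rfl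
  exact ⟨h_one, h_two, mul_left_cancel₀ Real.pi_ne_zero
    (by linear_combination h_three / 3 + Real.pi ^ 3 / 3 * h_one)⟩

lemma integral_const_sub_sq_of_mgf_mul_sin_eq {Ω : Type*} [MeasurableSpace Ω] {μ : Measure Ω}
    {X : Ω → ℝ} {C : ℝ} (h_exp : Set.Ioo (-1) 1 ⊆ integrableExpSet X μ)
    (h_mgf : ∀ s ∈ Set.Ioo (-1 : ℝ) 1,
      mgf X μ s * Real.sin (Real.pi * s) = C * Real.pi * (s - s ^ 3)) (d : ℝ) :
    ∫ ω, (d - X ω) ^ 2 ∂μ = C * (d ^ 2 + (Real.pi ^ 2 / 3 - 2)) := by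
  have h_zero : 0 ∈ interior (integrableExpSet X μ) :=
    interior_maximal h_exp isOpen_Ioo (by norm_num)
  obtain ⟨h_mass, h_mean, h_sq⟩ := iteratedDeriv_zero_of_mul_sin_eventuallyEq
    (analyticAt_mgf h_zero).contDiffAt
    ((isOpen_Ioo.eventually_mem (show (0 : ℝ) ∈ Set.Ioo (-1 : ℝ) 1 by norm_num)).mono h_mgf)
  rw [mgf_zero'] at h_mass
  rw [deriv_mgf_zero h_zero] at h_mean
  rw [iteratedDeriv_mgf_zero h_zero] at h_sq
  have h_int (k : ℕ) : Integrable (fun ω => X ω ^ k) μ :=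
    integrable_pow_of_mem_interior_integrableExpSet h_zero k
  have h_expand (ω : Ω) : (d - X ω) ^ 2 = d ^ 2 * X ω ^ 0 - 2 * d * X ω ^ 1 + X ω ^ 2 := by ring
  simp_rw [h_expand]
  have h_lin : Integrable (fun ω => d ^ 2 * X ω ^ 0 - 2 * d * X ω ^ 1) μ :=
    ((h_int 0).const_mul _).sub ((h_int 1).const_mul _)
  rw [integral_add h_lin (h_int 2), integral_sub ((h_int 0).const_mul _) ((h_int 1).const_mul _),
    integral_const_mul, integral_const_mul, show ∫ ω, X ω ^ 2 ∂μ = _ from h_sq]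
  simp only [pow_zero, pow_one, integral_const, smul_eq_mul, mul_one, h_mass, h_mean]
  ring

end MomentGeneratingFunction

section PairMoments

open ProbabilityTheory

lemma Gamma_two_add_mul_Gamma_two_sub_mul_sin {s : ℝ} (hs : s ∈ Set.Ioo (-1) 1) :
    Real.Gamma (2 + s) * Real.Gamma (2 - s) * Real.sin (Real.pi * s) =
      Real.pi * (s - s ^ 3) := by
  rcases eq_or_ne s 0 with rfl | hs_ne
  · simp
  have h_add : Real.Gamma (2 + s) = (1 + s) * (s * Real.Gamma s) := by
    rw [← Real.Gamma_add_one hs_ne, show 2 + s = s + 1 + 1 by ring,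
      Real.Gamma_add_one (by linarith [hs.1]), add_comm]
  have h_sub : Real.Gamma (2 - s) = (1 - s) * Real.Gamma (1 - s) := by
    rw [show 2 - s = 1 - s + 1 by ring, Real.Gamma_add_one (by linarith [hs.2])]
  have h_sin : Real.sin (Real.pi * s) ≠ 0 := by
    have h_pi := Real.pi_pos
    obtain ⟨hs_gt, hs_lt⟩ := hs
    rw [Ne, Real.sin_eq_zero_iff_of_lt_of_lt (by nlinarith) (by nlinarith)]
    exact mul_ne_zero h_pi.ne' hs_ne
  have h_reflection := Real.Gamma_mul_Gamma_one_sub s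
  rw [eq_div_iff h_sin] at h_reflection
  rw [h_add, h_sub]
  linear_combination (1 + s) * s * (1 - s) * h_reflection

variable {n : ℕ} {i j : Fin (n + 1)}

lemma prod_rpow_single {ι : Type*} [Fintype ι] [DecidableEq ι] (w : ι → ℝ) (i : ι) (a : ℝ) :
    ∏ l, w l ^ (Pi.single i a : ι → ℝ) l = w i ^ a := by
  rw [Fintype.prod_eq_single i fun l hl => by simp [hl], Pi.single_eq_same]

/-- Exponents of the Dirichlet integral whose integrand is the density `∏ l, softmax a l` tilted by
`softmax a i ^ (1 + s) * softmax a j ^ (1 - s)`. -/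
def pairExponent (i j : Fin (n + 1)) (s : ℝ) : Fin (n + 1) → ℝ :=
  1 + Pi.single i (1 + s) + Pi.single j (1 - s)

lemma pairExponent_pos (i j : Fin (n + 1)) {s : ℝ} (hs : s ∈ Set.Ioo (-1) 1) (l : Fin (n + 1)) :
    0 < pairExponent i j s l := by
  obtain ⟨hs_gt, hs_lt⟩ := hs
  simp only [pairExponent, Pi.add_apply, Pi.one_apply, Pi.single_apply]
  split_ifs <;> linarith

lemma sum_pairExponent (i j : Fin (n + 1)) (s : ℝ) :
    ∑ l, pairExponent i j s l = (n + 2 : ℕ) + 1 := by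
  simp only [pairExponent, Pi.add_apply, Pi.one_apply, Finset.sum_add_distrib, Finset.sum_const,
    Finset.card_univ, Fintype.card_fin, nsmul_one, Finset.sum_pi_single', Finset.mem_univ, if_true]
  push_cast
  ring

lemma prod_Gamma_pairExponent (hij : i ≠ j) (s : ℝ) :
    ∏ l, Real.Gamma (pairExponent i j s l) = Real.Gamma (2 + s) * Real.Gamma (2 - s) := by
  rw [Fintype.prod_eq_mul i j hij fun l hl => by simp [pairExponent, hl.1, hl.2]]
  simp only [pairExponent, Pi.add_apply, Pi.one_apply, Pi.single_eq_same,
    Pi.single_eq_of_ne hij, Pi.single_eq_of_ne hij.symm, add_zero]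
  ring_nf

lemma prod_softmax_rpow_pairExponent (i j : Fin (n + 1)) (s : ℝ) (a : Fin (n + 1) → ℝ) :
    ∏ l, softmax a l ^ pairExponent i j s l =
      (∏ l, softmax a l) * softmax a i * softmax a j * Real.exp (s * (a i - a j)) := by
  have h_exp : Real.exp (s * (a i - a j)) = softmax a i ^ s / softmax a j ^ s := by
    rw [mul_comm, Real.exp_mul, ← softmax_div_softmax,
      Real.div_rpow (softmax_pos a i).le (softmax_pos a j).le]
  simp_rw [pairExponent, Pi.add_apply, Pi.one_apply, Real.rpow_add (softmax_pos a _), Real.rpow_one,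
    Finset.prod_mul_distrib, prod_rpow_single, Real.rpow_add (softmax_pos a _),
    Real.rpow_sub (softmax_pos a _), Real.rpow_one, h_exp]
  ring

lemma integral_prod_softmax_mul_sub_sq (c : Fin n → ℝ) (hij : i ≠ j) :
    ∫ z : Fin n → ℝ, (∏ l, softmax (snocZero z) l) *
        (softmax (snocZero z) i * softmax (snocZero z) j *
          ((snocZero c i - snocZero z i) - (snocZero c j - snocZero z j)) ^ 2) =
      1 / Nat.factorial (n + 2) *
        ((snocZero c i - snocZero c j) ^ 2 + (Real.pi ^ 2 / 3 - 2)) := by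
  set ρ : (Fin n → ℝ) → ℝ := fun z =>
    (∏ l, softmax (snocZero z) l) * softmax (snocZero z) i * softmax (snocZero z) j
  set X : (Fin n → ℝ) → ℝ := fun z => snocZero z i - snocZero z j
  have hρ_nonneg (z : Fin n → ℝ) : 0 ≤ ρ z :=
    (mul_pos (mul_pos (prod_softmax_pos _) (softmax_pos _ i)) (softmax_pos _ j)).le
  have hρ_cont : Continuous ρ := by
    have := continuous_softmax (ι := Fin (n + 1))
    fun_prop
  have h_tilt (s : ℝ) (z : Fin n → ℝ) :
      ρ z * Real.exp (s * X z) = ∏ l, softmax (snocZero z) l ^ pairExponent i j s l :=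
    (prod_softmax_rpow_pairExponent i j s _).symm
  set μ : Measure (Fin n → ℝ) := volume.withDensity fun z => ENNReal.ofReal (ρ z)
  have h_integral (g : (Fin n → ℝ) → ℝ) : ∫ z, g z ∂μ = ∫ z, ρ z * g z := by
    rw [integral_withDensity_eq_integral_toReal_smul (by fun_prop) (by simp)]
    simp only [ENNReal.toReal_ofReal (hρ_nonneg _), smul_eq_mul]
  have h_exp : Set.Ioo (-1) 1 ⊆ integrableExpSet X μ := fun s hs => by
    rw [integrableExpSet, Set.mem_ofPred_eq,
      integrable_withDensity_iff_integrable_smul' (by fun_prop) (by simp)]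
    simp only [ENNReal.toReal_ofReal (hρ_nonneg _), smul_eq_mul, h_tilt]
    exact integrable_prod_softmax_rpow (pairExponent_pos i j hs)
  have h_mgf (s : ℝ) (hs : s ∈ Set.Ioo (-1) 1) : mgf X μ s * Real.sin (Real.pi * s) =
      1 / Nat.factorial (n + 2) * Real.pi * (s - s ^ 3) := by
    rw [mgf, h_integral]
    simp_rw [h_tilt]
    rw [integral_prod_softmax_rpow (pairExponent_pos i j hs), sum_pairExponent,
      prod_Gamma_pairExponent hij, Real.Gamma_nat_eq_factorial, mul_assoc (1 / _) Real.pi,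
      ← Gamma_two_add_mul_Gamma_two_sub_mul_sin hs]
    ring
  rw [← integral_const_sub_sq_of_mgf_mul_sin_eq h_exp h_mgf, h_integral]
  exact integral_congr_ae (.of_forall fun z => by simp only [ρ, X]; ring)

end PairMoments

section IntegrationByParts

lemma integral_fderiv_apply_eq_neg_integral_divergence_mul {ι : Type*} [Fintype ι] [DecidableEq ι]
    {F F' : ι → (ι → ℝ) → ℝ} {g : (ι → ℝ) → ℝ} {g' : (ι → ℝ) → (ι → ℝ) →L[ℝ] ℝ}
    (hF : ∀ l z, HasLineDerivAt ℝ (F l) (F' l z) z (Pi.single l 1))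
    (hg : ∀ z, HasFDerivAt g (g' z) z) (hFg : ∀ l, Integrable fun z => F l z * g z)
    (hF'g : ∀ l, Integrable fun z => F' l z * g z)
    (hFg' : ∀ l, Integrable fun z => F l z * g' z (Pi.single l 1)) :
    ∫ z, g' z (fun l => F l z) = -∫ z, (∑ l, F' l z) * g z := by
  have h_coord (l : ι) : ∫ z, F l z * g' z (Pi.single l 1) = -∫ z, F' l z * g z :=
    integral_bilinear_hasLineDerivAt_right_eq_neg_left_of_integrable
      (B := ContinuousLinearMap.mul ℝ ℝ) (hF'g l) (hFg' l) (hFg l) (fun z _ => hF l z)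
      fun z _ => (hg z).hasLineDerivAt _
  have h_apply (z : ι → ℝ) : g' z (fun l => F l z) = ∑ l, F l z * g' z (Pi.single l 1) := by
    conv_lhs => rw [pi_eq_sum_univ' fun l => F l z]
    simp
  simp_rw [h_apply, Finset.sum_mul]
  rw [integral_finsetSum _ fun l _ => hFg' l, integral_finsetSum _ fun l _ => hF'g l,
    ← Finset.sum_neg_distrib]
  exact Finset.sum_congr rfl fun l _ => h_coord l

variable {n : ℕ}

lemma hasLineDerivAt_prod_softmax_mul_sub (c z : Fin n → ℝ) (l : Fin n) :
    HasLineDerivAt ℝ (fun z => (∏ i, softmax (snocZero z) i) * (c l - z l))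
      ((∏ i, softmax (snocZero z) i) *
        ((1 - (n + 1) * softmax (snocZero z) l.castSucc) * (c l - z l) - 1))
      z (Pi.single l 1) := by
  have h_deriv := (((hasFDerivAt_prod_softmax (snocZero z)).comp z snocZero.hasFDerivAt).mul
    ((hasFDerivAt_apply l z).const_sub (c l))).hasLineDerivAt (Pi.single l 1)
  convert! h_deriv using 1
  simp only [Function.comp_apply, Fintype.card_fin, Nat.cast_add_one, smul_neg, add_apply,
    neg_apply, smul_apply, _root_.sum_apply, ContinuousLinearMap.smul_comp,
    ContinuousLinearMap.comp_apply, ContinuousLinearMap.proj_apply, snocZero_single,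
    Pi.single_apply, smul_eq_mul, mul_ite, mul_one, mul_zero, Finset.sum_ite_eq', Finset.mem_univ,
    if_true]
  ring

lemma sum_one_sub_mul_softmax_mul_sub (c z : Fin n → ℝ) :
    ∑ l : Fin n, ((1 - (n + 1) * softmax (snocZero z) l.castSucc) * (c l - z l) - 1) =
      -scaledScore (snocZero c) (snocZero z) := by
  have h_term (l : Fin n) : (1 - (n + 1) * softmax (snocZero z) l.castSucc) * (c l - z l) - 1 =
      -(((n + 1) * softmax (snocZero z) l.castSucc - 1) * (c l - z l) + 1) := by ring
  simp_rw [h_term, Finset.sum_neg_distrib, Finset.sum_add_distrib]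
  simp [scaledScore, Fin.sum_univ_castSucc]

lemma integral_prod_softmax_mul_scaledScore_mul (c : Fin n → ℝ) {g : (Fin n → ℝ) → ℝ}
    {g' : (Fin n → ℝ) → (Fin n → ℝ) →L[ℝ] ℝ} (hg : ∀ z, HasFDerivAt g (g' z) z)
    (hg_growth : HasPolynomialGrowth g) (hg'_growth : ∀ v, HasPolynomialGrowth fun z => g' z v) :
    ∫ z, (∏ i, softmax (snocZero z) i) * (scaledScore (snocZero c) (snocZero z) * g z) =
      ∫ z, (∏ i, softmax (snocZero z) i) * g' z (c - z) := by
  have h_parts := integral_fderiv_apply_eq_neg_integral_divergence_mul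
    (fun l z => hasLineDerivAt_prod_softmax_mul_sub c z l) hg
    (fun l => by
      simp_rw [mul_assoc]
      exact integrable_prod_softmax_mul (by fun_prop))
    (fun l => by
      simp_rw [mul_assoc]
      exact integrable_prod_softmax_mul (by fun_prop))
    (fun l => by
      simp_rw [mul_assoc]
      exact integrable_prod_softmax_mul (by fun_prop))
  simp_rw [← Finset.mul_sum, sum_one_sub_mul_softmax_mul_sub, mul_neg, neg_mul, integral_neg,
    neg_neg, mul_assoc] at h_parts
  rw [← h_parts]
  exact integral_congr_ae <| .of_forall fun z =>
    (g' z).map_smul (∏ i, softmax (snocZero z) i) (c - z)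

end IntegrationByParts

section SecondMoment

variable {n : ℕ}

lemma integral_prod_softmax_mul_scaledScore (c : Fin n → ℝ) :
    ∫ z, (∏ i, softmax (snocZero z) i) * scaledScore (snocZero c) (snocZero z) = 0 := by
  simpa using integral_prod_softmax_mul_scaledScore_mul c (g := fun _ => 1)
    (fun _ => hasFDerivAt_const _ _) (by fun_prop) fun v => by simpa using .const 0

lemma integral_prod_softmax_mul_scaledScore_sq_eq (c : Fin n → ℝ) :
    ∫ z, (∏ i, softmax (snocZero z) i) * scaledScore (snocZero c) (snocZero z) ^ 2 =
      ∫ z, (∏ i, softmax (snocZero z) i) *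
        scaledScoreFDeriv (snocZero c) (snocZero z) (snocZero c - snocZero z) := by
  simpa [sq] using integral_prod_softmax_mul_scaledScore_mul c
    (g' := fun z => scaledScoreFDeriv (snocZero c) (snocZero z) ∘L snocZero)
    (fun z => (hasFDerivAt_scaledScore _ _).comp z snocZero.hasFDerivAt)
    (hasPolynomialGrowth_scaledScore _ snocZero)
    fun v => hasPolynomialGrowth_scaledScoreFDeriv _ (snocZero v) snocZero

lemma sum_sum_ite_eq_zero_else {ι : Type*} [Fintype ι] [DecidableEq ι] (κ : ℝ) :
    ∑ i : ι, ∑ j : ι, (if i = j then 0 else κ) = Fintype.card ι * (Fintype.card ι - 1) * κ := by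
  have h_term (i j : ι) : (if i = j then 0 else κ) = κ - if i = j then κ else 0 := by
    split_ifs <;> simp
  simp_rw [h_term, Finset.sum_sub_distrib, Finset.sum_ite_eq, Finset.mem_univ, if_true,
    Finset.sum_const, Finset.card_univ, nsmul_eq_mul]
  ring

lemma integrable_prod_softmax_mul_sub_sq (c : Fin n → ℝ) (i j : Fin (n + 1)) :
    Integrable fun z => (∏ l, softmax (snocZero z) l) *
      (softmax (snocZero z) i * softmax (snocZero z) j *
        ((snocZero c i - snocZero z i) - (snocZero c j - snocZero z j)) ^ 2) :=
  integrable_prod_softmax_mul (by fun_prop)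

lemma integral_prod_softmax_mul_sum_sum_sub_sq (c : Fin n → ℝ) :
    ∫ z, (∏ l, softmax (snocZero z) l) *
        ∑ i, ∑ j, softmax (snocZero z) i * softmax (snocZero z) j *
          ((snocZero c i - snocZero z i) - (snocZero c j - snocZero z j)) ^ 2 =
      1 / Nat.factorial (n + 2) * (∑ i, ∑ j, (snocZero c i - snocZero c j) ^ 2 +
        (n + 1) * n * (Real.pi ^ 2 / 3 - 2)) := by
  have h_pair (i j : Fin (n + 1)) : ∫ z, (∏ l, softmax (snocZero z) l) *
      (softmax (snocZero z) i * softmax (snocZero z) j *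
        ((snocZero c i - snocZero z i) - (snocZero c j - snocZero z j)) ^ 2) =
      1 / Nat.factorial (n + 2) * ((snocZero c i - snocZero c j) ^ 2 +
        if i = j then 0 else Real.pi ^ 2 / 3 - 2) := by
    split_ifs with hij
    · simp [hij]
    · exact integral_prod_softmax_mul_sub_sq c hij
  have h_int := integrable_prod_softmax_mul_sub_sq c
  simp_rw [Finset.mul_sum]
  rw [integral_finsetSum _ fun i _ => integrable_finsetSum _ fun j _ => h_int i j]
  simp_rw [integral_finsetSum _ fun j _ => h_int _ j, h_pair, ← Finset.mul_sum,
    Finset.sum_add_distrib, sum_sum_ite_eq_zero_else, Fintype.card_fin, Nat.cast_add_one,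
    add_sub_cancel_right]

lemma integral_prod_softmax_mul_scaledScore_sq (c : Fin n → ℝ) :
    ∫ z, (∏ i, softmax (snocZero z) i) * scaledScore (snocZero c) (snocZero z) ^ 2 =
      1 / Nat.factorial n * ((n * ((n + 1) * Real.pi ^ 2 / 6 + 1) +
        1 / 2 * ∑ i, ∑ j, (snocZero c i - snocZero c j) ^ 2) / (n + 2)) := by
  have h_pairs := (integrable_prod_softmax_mul (n := n) (f := fun z => ∑ i, ∑ j,
    softmax (snocZero z) i * softmax (snocZero z) j *
      ((snocZero c i - snocZero z i) - (snocZero c j - snocZero z j)) ^ 2)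
    (by fun_prop)).const_mul (((n : ℝ) + 1) / 2)
  have h_score := integrable_prod_softmax_mul
    (hasPolynomialGrowth_scaledScore (snocZero c) snocZero)
  have h_prod : Integrable fun z : Fin n → ℝ => ∏ i, softmax (snocZero z) i := by
    simpa using integrable_prod_softmax_mul (.const 1)
  have h_factorial : (Nat.factorial (n + 2) : ℝ) = (n + 2) * ((n + 1) * Nat.factorial n) := by
    rw [Nat.factorial_succ, Nat.factorial_succ]
    push_cast
    ring
  rw [integral_prod_softmax_mul_scaledScore_sq_eq]
  simp_rw [scaledScoreFDeriv_sub, Fintype.card_fin, Nat.cast_add_one, add_sub_cancel_right,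
    mul_add, mul_sub, mul_left_comm _ (_ / 2 : ℝ)]
  rw [integral_add (by exact h_pairs.sub h_score) (h_prod.mul_const _),
    integral_sub h_pairs h_score, integral_const_mul, integral_mul_const,
    integral_prod_softmax_mul_sum_sum_sub_sq, integral_prod_softmax_mul_scaledScore,
    integral_prod_softmax, h_factorial]
  field_simp
  ring

end SecondMoment

section SimplexChart

lemma continuous_fillMap (K : ℕ) : Continuous (fillMap K) := by
  refine continuous_pi fun i => ?_
  unfold fillMap
  split_ifs <;> fun_prop

lemma fillMap_injective (K : ℕ) : Function.Injective (fillMap K) := by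
  intro u v huv
  ext j
  simpa [fillMap] using congrFun huv ⟨j, by omega⟩

lemma measurableEmbedding_fillMap (K : ℕ) : MeasurableEmbedding (fillMap K) :=
  (continuous_fillMap K).measurableEmbedding (fillMap_injective K)

lemma volume_setOf_sum_eq {ι : Type*} [Fintype ι] {a : ℝ} (ha : a ≠ 0) :
    volume {u : ι → ℝ | ∑ j, u j = a} = 0 := by
  let s := (AffineSubspace.mk' a ⊥).comap (∑ j, LinearMap.proj j : (ι → ℝ) →ₗ[ℝ] ℝ).toAffineMap
  have h_mem (u : ι → ℝ) : u ∈ s ↔ ∑ j, u j = a := by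
    simp [s, sub_eq_zero]
  have h_ne_top : s ≠ ⊤ := fun h => ha.symm <| by
    simpa using (h_mem 0).1 (h ▸ AffineSubspace.mem_top ℝ _ _)
  convert Measure.addHaar_affineSubspace volume s h_ne_top using 2
  ext u
  exact (h_mem u).symm

lemma closedSimplex_ae_eq_openSimplex {ι : Type*} [Fintype ι] :
    {u : ι → ℝ | (∀ j, 0 ≤ u j) ∧ ∑ j, u j ≤ 1} =ᵐ[volume]
      {u | (∀ j, 0 < u j) ∧ ∑ j, u j < 1} := by
  have h_coord : ∀ᵐ u : ι → ℝ, ∀ j, u j ≠ 0 :=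
    ae_all_iff.2 fun j => by
      simpa [ae_iff, volume_pi] using Measure.pi_hyperplane (fun _ : ι => volume (α := ℝ)) j 0
  have h_sum : ∀ᵐ u : ι → ℝ, ∑ j, u j ≠ 1 := by
    simpa [ae_iff] using volume_setOf_sum_eq (ι := ι) one_ne_zero
  filter_upwards [h_coord, h_sum] with u hu_coord hu_sum
  exact propext ⟨fun ⟨h_nonneg, h_le⟩ =>
      ⟨fun j => (h_nonneg j).lt_of_ne' (hu_coord j), h_le.lt_of_ne hu_sum⟩,
    fun ⟨h_pos, h_lt⟩ => ⟨fun j => (h_pos j).le, h_lt.le⟩⟩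

variable {n : ℕ}

/-- The parametrization of the open simplex, in the coordinates `x_1, …, x_{K-1}` used by
`fillMap`, by logits relative to the last entry. -/
noncomputable def simplexChart (y : Fin n → ℝ) (i : Fin n) : ℝ :=
  softmax (snocZero y) i.castSucc

/-- The derivative of `simplexChart` at `y`. -/
noncomputable def simplexChartFDeriv (y : Fin n → ℝ) : (Fin n → ℝ) →L[ℝ] (Fin n → ℝ) :=
  .pi fun i => .proj i.castSucc ∘L softmaxFDeriv (snocZero y) ∘L snocZero

lemma softmax_snocZero_last (y : Fin n → ℝ) :
    softmax (snocZero y) (Fin.last n) = 1 - ∑ j, simplexChart y j := by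
  rw [eq_sub_iff_add_eq', ← sum_softmax (snocZero y), Fin.sum_univ_castSucc]
  rfl

lemma fillMap_simplexChart (y : Fin n → ℝ) :
    fillMap (n + 1) (simplexChart y) = softmax (snocZero y) := by
  ext i
  induction i using Fin.lastCases with
  | last => simp [fillMap, softmax_snocZero_last]
  | cast i => simp [fillMap, simplexChart]

lemma hasFDerivAt_simplexChart (y : Fin n → ℝ) :
    HasFDerivAt simplexChart (simplexChartFDeriv y) y :=
  hasFDerivAt_pi.2 fun i =>
    (hasFDerivAt_pi.1 (hasFDerivAt_softmax (snocZero y)) i.castSucc).comp y snocZero.hasFDerivAt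

lemma det_simplexChartFDeriv (y : Fin n → ℝ) :
    (simplexChartFDeriv y).det = ∏ i, softmax (snocZero y) i := by
  have h_matrix : LinearMap.toMatrix' (simplexChartFDeriv y : (Fin n → ℝ) →ₗ[ℝ] (Fin n → ℝ)) =
      Matrix.diagonal (simplexChart y) * (1 + Matrix.replicateCol Unit (fun _ => (-1 : ℝ)) *
        Matrix.replicateRow Unit (simplexChart y)) := by
    ext i j
    rw [Matrix.diagonal_mul, LinearMap.toMatrix'_apply]
    simp [simplexChartFDeriv, softmaxFDeriv_apply, snocZero_single, simplexChart,
      Matrix.one_apply, Matrix.mul_apply, Pi.single_apply, sub_eq_add_neg]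
  rw [ContinuousLinearMap.det, ← LinearMap.det_toMatrix', h_matrix, Matrix.det_mul,
    Matrix.det_diagonal, Matrix.det_one_add_replicateCol_mul_replicateRow, Fin.prod_univ_castSucc,
    softmax_snocZero_last]
  simp [simplexChart, dotProduct, sub_eq_add_neg]

lemma simplexChart_injective : Function.Injective (simplexChart (n := n)) := by
  intro y z hyz
  have h_softmax : softmax (snocZero y) = softmax (snocZero z) := by
    rw [← fillMap_simplexChart, hyz, fillMap_simplexChart]
  have h_logit (y : Fin n → ℝ) (i : Fin n) : y i =
      Real.log (softmax (snocZero y) i.castSucc / softmax (snocZero y) (Fin.last n)) := by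
    simp [softmax_div_softmax]
  ext i
  rw [h_logit y, h_softmax, ← h_logit z]

lemma range_simplexChart :
    Set.range (simplexChart (n := n)) = {u | (∀ j, 0 < u j) ∧ ∑ j, u j < 1} := by
  ext u
  constructor
  · rintro ⟨y, rfl⟩
    exact ⟨fun j => softmax_pos _ _, by
      simpa [softmax_snocZero_last] using softmax_pos (snocZero y) (Fin.last n)⟩
  · rintro ⟨hu_pos, hu_sum⟩
    set x : Fin (n + 1) → ℝ := fillMap (n + 1) u
    have hx_castSucc (i : Fin n) : x i.castSucc = u i := by simp [x, fillMap]
    have hx_last : x (Fin.last n) = 1 - ∑ j, u j := by simp [x, fillMap]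
    have hx_pos (i : Fin (n + 1)) : 0 < x i := by
      induction i using Fin.lastCases with
      | last => rw [hx_last]; linarith
      | cast i => exact hx_castSucc i ▸ hu_pos i
    have hx_sum : ∑ i, x i = 1 := by simp [Fin.sum_univ_castSucc, hx_castSucc, hx_last]
    refine ⟨fun i => Real.log (x i.castSucc) - Real.log (x (Fin.last n)), ?_⟩
    ext i
    rw [simplexChart, snocZero_sub_last fun i => Real.log (x i), softmax_add_const,
      softmax_log hx_pos hx_sum, hx_castSucc]

lemma integral_simplexMeasure (h : (Fin (n + 1) → ℝ) → ℝ) :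
    ∫ x, h x ∂simplexMeasure (n + 1) =
      ∫ y : Fin n → ℝ, (∏ i, softmax (snocZero y) i) * h (softmax (snocZero y)) := by
  calc ∫ x, h x ∂simplexMeasure (n + 1)
      = ∫ u in {u : Fin n → ℝ | (∀ j, 0 ≤ u j) ∧ ∑ j, u j ≤ 1}, h (fillMap (n + 1) u) :=
        (measurableEmbedding_fillMap (n + 1)).integral_map h
    _ = ∫ u in simplexChart (n := n) '' Set.univ, h (fillMap (n + 1) u) := by
        rw [setIntegral_congr_set closedSimplex_ae_eq_openSimplex, ← range_simplexChart,
          Set.image_univ]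
    _ = ∫ y : Fin n → ℝ, (∏ i, softmax (snocZero y) i) * h (softmax (snocZero y)) := by
        rw [integral_image_eq_integral_abs_det_fderiv_smul volume MeasurableSet.univ
          (fun y _ => (hasFDerivAt_simplexChart y).hasFDerivWithinAt)
          simplexChart_injective.injOn, setIntegral_univ]
        simp_rw [det_simplexChartFDeriv, abs_of_pos (prod_softmax_pos _), fillMap_simplexChart,
          smul_eq_mul]

end SimplexChart

section Concrete

variable {K : ℕ} {β x : Fin K → ℝ} {τ : ℝ}

/-- The logits of the weights `(β i / x i ^ τ) / kfun K β τ x`. -/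
noncomputable def concreteLogits (β : Fin K → ℝ) (τ : ℝ) (x : Fin K → ℝ) (i : Fin K) : ℝ :=
  Real.log (β i) - τ * Real.log (x i)

lemma exp_concreteLogits (hβ : ∀ i, 0 < β i) (hx : ∀ i, 0 < x i) (i : Fin K) :
    Real.exp (concreteLogits β τ x i) = β i / x i ^ τ := by
  rw [concreteLogits, Real.exp_sub, Real.exp_log (hβ i), Real.rpow_def_of_pos (hx i), mul_comm τ]

lemma prod_mul_concreteDensity (hβ : ∀ i, 0 < β i) (hx : ∀ i, 0 < x i) :
    (∏ i, x i) * concreteDensity K β τ x =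
      Nat.factorial (K - 1) * τ ^ (K - 1) * ∏ i, softmax (concreteLogits β τ x) i := by
  have h_factor (i : Fin K) : β i / x i ^ (τ + 1) = Real.exp (concreteLogits β τ x i) / x i := by
    rw [exp_concreteLogits hβ hx, Real.rpow_add_one (hx i).ne', div_div]
  have h_sum_nonneg : 0 ≤ ∑ j, Real.exp (concreteLogits β τ x j) := by positivity
  have h_prod : ∏ i, x i ≠ 0 := Finset.prod_ne_zero_iff.2 fun i _ => (hx i).ne'
  simp_rw [concreteDensity, h_factor, ← exp_concreteLogits hβ hx, softmax,
    Finset.prod_div_distrib, Finset.prod_const, Finset.card_univ, Fintype.card_fin]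
  rw [Real.rpow_neg h_sum_nonneg, Real.rpow_natCast]
  field_simp

lemma concrete_score_eq (hβ : ∀ i, 0 < β i) (hx : ∀ i, 0 < x i) (hτ : τ ≠ 0) :
    (K * ∑ l, (β l / x l ^ τ) * Real.log (x l)) / kfun K β τ x - ∑ j, Real.log (x j) +
        (K - 1) / τ =
      scaledScore (fun i => Real.log (β i)) (concreteLogits β τ x) / τ := by
  have h_mean : (K * ∑ l, (β l / x l ^ τ) * Real.log (x l)) / kfun K β τ x =
      K * ∑ l, softmax (concreteLogits β τ x) l * Real.log (x l) := by
    simp_rw [kfun, ← exp_concreteLogits hβ hx, softmax, div_mul_eq_mul_div, ← Finset.sum_div,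
      mul_div_assoc]
  have h_scaled : scaledScore (fun i => Real.log (β i)) (concreteLogits β τ x) =
      τ * (K * ∑ l, softmax (concreteLogits β τ x) l * Real.log (x l) - ∑ j, Real.log (x j)) +
        (K - 1) := by
    simp_rw [scaledScore, Fintype.card_fin, Finset.mul_sum, ← Finset.sum_sub_distrib,
      Finset.mul_sum]
    congr! 2 with i
    rw [concreteLogits]
    ring
  rw [h_mean, h_scaled]
  field_simp

/-- The logits of `β` relative to its last entry. -/
noncomputable def relativeLogits {n : ℕ} (β : Fin (n + 1) → ℝ) (i : Fin n) : ℝ :=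
  Real.log (β i.castSucc) - Real.log (β (Fin.last n))

lemma snocZero_relativeLogits {n : ℕ} (β : Fin (n + 1) → ℝ) :
    snocZero (relativeLogits β) = fun i => Real.log (β i) + -Real.log (β (Fin.last n)) :=
  snocZero_sub_last fun i => Real.log (β i)

lemma snocZero_relativeLogits_sub_smul {n : ℕ} (β : Fin (n + 1) → ℝ) (τ : ℝ) (y : Fin n → ℝ) :
    snocZero (relativeLogits β - τ • y) = fun i => concreteLogits β τ (softmax (snocZero y)) i +
      (-Real.log (β (Fin.last n)) - τ * Real.log (∑ j, Real.exp (snocZero y j))) := by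
  ext i
  rw [map_sub, map_smul, Pi.sub_apply, snocZero_relativeLogits, concreteLogits, log_softmax,
    Pi.smul_apply, smul_eq_mul]
  ring

lemma prod_softmax_mul_concreteDensity_mul_score_sq {n : ℕ} {β : Fin (n + 1) → ℝ}
    (hβ : ∀ i, 0 < β i) (hτ : τ ≠ 0) (y : Fin n → ℝ) {x : Fin (n + 1) → ℝ}
    (hx : x = softmax (snocZero y)) :
    (∏ i, x i) * (concreteDensity (n + 1) β τ x *
        (((n + 1 : ℕ) * ∑ l, (β l / x l ^ τ) * Real.log (x l)) / kfun (n + 1) β τ x -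
          ∑ j, Real.log (x j) + ((n + 1 : ℕ) - 1) / τ) ^ 2) =
      Nat.factorial n * τ ^ n / τ ^ 2 *
        ((∏ i, softmax (snocZero (relativeLogits β - τ • y)) i) *
          scaledScore (snocZero (relativeLogits β)) (snocZero (relativeLogits β - τ • y)) ^ 2) := by
  have hx_pos (i : Fin (n + 1)) : 0 < x i := hx ▸ softmax_pos _ i
  rw [← mul_assoc, prod_mul_concreteDensity hβ hx_pos, concrete_score_eq hβ hx_pos hτ,
    snocZero_relativeLogits, snocZero_relativeLogits_sub_smul, softmax_add_const,
    scaledScore_add_const, ← hx, Nat.add_sub_cancel]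
  ring

end Concrete

/-- The τ–τ component of the Fisher information of the Concrete distribution in score
form: `E[(∂log f/∂τ)²]` equals the coefficient of `dτ²` in the information metric. -/
theorem concrete_fisher_tau_tau_score
    (K : ℕ) (hK : 2 ≤ K) (τ : ℝ) (hτ : 0 < τ)
    (β : Fin K → ℝ) (hβ : ∀ i, 0 < β i) :
    ∫ x, concreteDensity K β τ x *
          (((K : ℝ) * ∑ l, (β l / x l ^ τ) * Real.log (x l)) / kfun K β τ x
            - (∑ j, Real.log (x j)) + ((K : ℝ) - 1) / τ) ^ 2
        ∂(simplexMeasure K)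
      = (((K : ℝ) - 1) * ((K : ℝ) * Real.pi ^ 2 / 6 + 1)
          + (1 / 2) * ∑ i, ∑ j, (Real.log (β i) - Real.log (β j)) ^ 2) /
        (((K : ℝ) + 1) * τ ^ 2) := by
  obtain ⟨n, rfl⟩ : ∃ n, K = n + 1 := ⟨K - 1, by omega⟩
  set c := relativeLogits β
  rw [integral_simplexMeasure]
  simp_rw [prod_softmax_mul_concreteDensity_mul_score_sq hβ hτ.ne' _ rfl]
  rw [integral_const_mul, Measure.integral_comp_smul volume (fun u =>
      (∏ i, softmax (snocZero (c - u)) i) * scaledScore (snocZero c) (snocZero (c - u)) ^ 2),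
    integral_sub_left_eq_self (fun z =>
      (∏ i, softmax (snocZero z) i) * scaledScore (snocZero c) (snocZero z) ^ 2) volume c,
    integral_prod_softmax_mul_scaledScore_sq]
  simp_rw [c, snocZero_relativeLogits, add_sub_add_right_eq_sub]
  rw [Module.finrank_fin_fun, abs_of_pos (by positivity), smul_eq_mul]
  push_cast
  field_simp
  ring
end
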